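/- arXiv:2506.12789 — 7 statements merged into one kernel-verified Lean document; each statement's English description precedes it below -/
import Mathlib

section
/- Let d be an odd positive integer and n a positive integer. Then the 2-adic valuation of W_d(n) equals s₂(n); i.e., ν₂(W_d(n)) = s₂(n). -/
/-- `Wstar d n` is the number of Abelian squares: the sum over all tuples
`(x₁,…,x_d)` of nonnegative integers summing to `n` of the square of the
multinomial coefficient `n!/(x₁!⋯x_d!)`. -/
def Wstar (d n : ℕ) : ℕ :=
  ∑ x ∈ Finset.Nat.antidiagonalTuple d n, (Nat.multinomial Finset.univ x) ^ 2

/-- `W d n` is the number of `2n`-step closed walks at the origin in `ℤ^d`. -/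
def W (d n : ℕ) : ℕ := Nat.choose (2 * n) n * Wstar d n

/-- `s2 n` is the number of ones in the binary expansion of `n`. -/
def s2 (n : ℕ) : ℕ := (Nat.digits 2 n).sum

theorem wstar_odd (d n : ℕ) (hodd : Odd d) : Odd (Wstar d n) := by
  have h : ((Wstar d n : ℕ) : ZMod 2) = ((d ^ n : ℕ) : ZMod 2) := by
    have hs : Finset.Nat.antidiagonalTuple d n = Finset.piAntidiag (Finset.univ : Finset (Fin d)) n := by
      ext x
      simp [Finset.Nat.mem_antidiagonalTuple, Finset.mem_piAntidiag]
    have h1 := Finset.sum_pow_eq_sum_piAntidiag (Finset.univ : Finset (Fin d)) (fun _ => (1 : ZMod 2)) n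
    simp only [Finset.sum_const, Finset.card_univ, Fintype.card_fin, nsmul_eq_mul, mul_one, one_pow,
      Finset.prod_const_one] at h1
    have h2 : ∀ a : ZMod 2, a ^ 2 = a := by decide
    unfold Wstar
    push_cast
    rw [h1, hs]
    exact Finset.sum_congr rfl fun x _ => h2 _
  rw [← ZMod.natCast_eq_one_iff_odd, h, ZMod.natCast_eq_one_iff_odd]
  exact hodd.pow

theorem stmt_0 (d n : ℕ) (hd : 0 < d) (hodd : Odd d) (hn : 0 < n) :
    padicValNat 2 (W d n) = s2 n := by
  have ho := wstar_odd d n hodd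
  have hc : (2 * n).choose n ≠ 0 := (Nat.choose_pos (by omega)).ne'
  have hv : padicValNat 2 (Wstar d n) = 0 :=
    padicValNat.eq_zero_of_not_dvd (fun h => by
      have := ho.not_two_dvd_nat
      exact this h)
  unfold W
  rw [padicValNat.mul hc (by rintro h; simp [h] at ho), hv, add_zero]
  have h := sub_one_mul_padicValNat_choose_eq_sub_sum_digits' (p := 2) (k := n) (n := n)
  have hdig : (Nat.digits 2 (n + n)).sum = (Nat.digits 2 n).sum := by
    rw [← two_mul, Nat.digits_base_mul (by norm_num) hn]
    simp
  rw [hdig] at h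
  rw [two_mul]
  unfold s2
  omega
end

section
/- Let d be a positive integer with ν₂(d) = 1 (i.e., d ≡ 2 (mod 4)) and let n be a positive integer. Then ν₂(W_d(n)) = 2·s₂(n). -/
open Finset in
lemma aux_coeff (d n : ℕ) :
    PowerSeries.coeff n ((PowerSeries.mk fun k => (1 : ℚ) / ((k.factorial : ℚ)) ^ 2) ^ d)
      = (Wstar d n : ℚ) / ((n.factorial : ℚ)) ^ 2 := by
  classical
  have h0 : (PowerSeries.mk fun k => (1 : ℚ) / ((k.factorial : ℚ)) ^ 2) ^ d
      = ∏ _i : Fin d, (PowerSeries.mk fun k => (1 : ℚ) / ((k.factorial : ℚ)) ^ 2) := by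
    simp
  rw [h0, PowerSeries.coeff_prod, Wstar]
  push_cast
  rw [Finset.sum_div]
  refine Finset.sum_bij' (fun l _ => (l : Fin d → ℕ))
    (fun x _ => Finsupp.equivFunOnFinite.symm x) ?_ ?_ ?_ ?_ ?_
  · intro l hl
    rw [Finset.Nat.mem_antidiagonalTuple]
    exact (Finset.mem_finsuppAntidiag.1 hl).1
  · intro x hx
    rw [Finset.Nat.mem_antidiagonalTuple] at hx
    rw [Finset.mem_finsuppAntidiag]
    exact ⟨by simpa using hx, by simp⟩
  · intro l hl
    ext i
    simp
  · intro x hx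
    ext i
    simp
  · intro l hl
    have hs : ∑ i, l i = n := (Finset.mem_finsuppAntidiag.1 hl).1
    have hm := Nat.multinomial_spec (Finset.univ : Finset (Fin d)) (l : Fin d → ℕ)
    rw [hs] at hm
    have hm' : (∏ i, ((l i).factorial : ℚ)) * (Nat.multinomial Finset.univ (l : Fin d → ℕ) : ℚ)
        = (n.factorial : ℚ) := by exact_mod_cast hm
    have hp : (∏ i, ((l i).factorial : ℚ)) ≠ 0 :=
      Finset.prod_ne_zero_iff.2 fun i _ => by exact_mod_cast (l i).factorial_ne_zero
    have hn : (n.factorial : ℚ) ≠ 0 := by exact_mod_cast n.factorial_ne_zero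
    simp only [PowerSeries.coeff_mk]
    rw [Finset.prod_div_distrib, Finset.prod_pow, Finset.prod_const_one, ← hm']
    have hq : (Nat.multinomial Finset.univ (l : Fin d → ℕ) : ℚ) ≠ 0 := by
      intro h
      rw [h, mul_zero] at hm'
      exact hn hm'.symm
    field_simp

lemma aux_zero (n : ℕ) : Wstar 0 n = 0 ^ n := by
  cases n with
  | zero => simp [Wstar]
  | succ n => simp [Wstar]

lemma aux_one (n : ℕ) : Wstar 1 n = 1 := by
  simp [Wstar, Finset.Nat.antidiagonalTuple_one, Nat.multinomial]
  exact Nat.div_self n.factorial_pos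

lemma aux_add (a b n : ℕ) : Wstar (a + b) n =
    ∑ p ∈ Finset.HasAntidiagonal.antidiagonal n, (n.choose p.1) ^ 2 * (Wstar a p.1 * Wstar b p.2) := by
  have h := aux_coeff (a + b) n
  have hn : (n.factorial : ℚ) ≠ 0 := by exact_mod_cast n.factorial_ne_zero
  rw [pow_add, PowerSeries.coeff_mul, eq_div_iff (pow_ne_zero 2 hn)] at h
  have h' : (Wstar (a + b) n : ℚ) = ((∑ p ∈ Finset.HasAntidiagonal.antidiagonal n,
      (n.choose p.1) ^ 2 * (Wstar a p.1 * Wstar b p.2) : ℕ) : ℚ) := by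
    rw [← h, Finset.sum_mul]
    push_cast
    refine Finset.sum_congr rfl fun p hp => ?_
    rw [aux_coeff, aux_coeff]
    obtain ⟨i, j⟩ := p
    have hij : i + j = n := Finset.HasAntidiagonal.mem_antidiagonal.1 hp
    subst hij
    have hc : ((i + j).choose i : ℚ) * i.factorial * j.factorial = (i + j).factorial := by
      exact_mod_cast (Nat.choose_symm_add (a := i) (b := j)).symm ▸ Nat.add_choose_mul_factorial_mul_factorial i j
    have hi : (i.factorial : ℚ) ≠ 0 := by exact_mod_cast i.factorial_ne_zero
    have hj : (j.factorial : ℚ) ≠ 0 := by exact_mod_cast j.factorial_ne_zero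
    simp only
    rw [← hc]
    field_simp
  exact_mod_cast h'

lemma aux_two (n : ℕ) : Wstar 2 n = (2 * n).choose n := by
  rw [show 2 = 1 + 1 from rfl, aux_add]
  simp only [aux_one, mul_one]
  rw [Finset.Nat.sum_antidiagonal_eq_sum_range_succ_mk]
  exact Nat.sum_range_choose_sq n

lemma aux_val (a b : ℕ) :
    padicValNat 2 ((a + b).choose a) + s2 (a + b) = s2 a + s2 b := by
  have h1 := sub_one_mul_padicValNat_factorial (p := 2) a
  have h2 := sub_one_mul_padicValNat_factorial (p := 2) b
  have h3 := sub_one_mul_padicValNat_factorial (p := 2) (a + b)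
  have l1 := Nat.digit_sum_le 2 a
  have l2 := Nat.digit_sum_le 2 b
  have l3 := Nat.digit_sum_le 2 (a + b)
  have hc : (a + b).choose a * a.factorial * b.factorial = (a + b).factorial := (Nat.choose_symm_add (a := a) (b := b)).symm ▸ Nat.add_choose_mul_factorial_mul_factorial a b
  have hch : (a + b).choose a ≠ 0 := (Nat.choose_pos (Nat.le_add_right a b)).ne'
  rw [← hc, padicValNat.mul (mul_ne_zero hch a.factorial_ne_zero) b.factorial_ne_zero,
    padicValNat.mul hch a.factorial_ne_zero] at h3
  unfold s2
  omega

lemma aux_s2_double (n : ℕ) : s2 (n + n) = s2 n := by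
  rcases Nat.eq_zero_or_pos n with rfl | h
  · rfl
  · unfold s2
    rw [← two_mul, Nat.digits_base_mul (by norm_num) h]
    simp

lemma aux_central (n : ℕ) : padicValNat 2 ((2 * n).choose n) = s2 n := by
  have h := aux_val n n
  rw [aux_s2_double, ← two_mul] at h
  omega

lemma aux_odd (m : ℕ) (hm : m ≠ 0) : ∃ o, m = 2 ^ padicValNat 2 m * o ∧ o % 2 = 1 := by
  obtain ⟨o, ho⟩ := pow_padicValNat_dvd (p := 2) (n := m)
  refine ⟨o, ho, ?_⟩
  by_contra hc
  have h2 : 2 ∣ o := by omega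
  apply pow_succ_padicValNat_not_dvd (p := 2) hm
  rw [pow_succ]
  nth_rewrite 2 [ho]
  exact mul_dvd_mul_left _ h2

lemma aux_main (m : ℕ) : ∀ n, ∃ u, Wstar (2 * m) n = 2 ^ s2 n * u ∧ u ≡ m ^ n [MOD 2] := by
  induction m with
  | zero =>
    intro n
    refine ⟨0 ^ n, ?_, rfl⟩
    rw [mul_zero, aux_zero]
    cases n <;> simp [s2]
  | succ m ih =>
    intro n
    choose u hu hu2 using ih
    have ho : ∀ k, ∃ o, (2 * k).choose k = 2 ^ s2 k * o ∧ o % 2 = 1 := fun k => by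
      have := aux_odd ((2 * k).choose k) (Nat.choose_pos (by omega)).ne'
      rwa [aux_central] at this
    choose o ho ho2 using ho
    refine ⟨∑ p ∈ Finset.HasAntidiagonal.antidiagonal n, (n.choose p.1) ^ 2 *
      2 ^ padicValNat 2 (n.choose p.1) * (u p.1 * o p.2), ?_, ?_⟩
    · rw [mul_add, mul_one, aux_add, Finset.mul_sum]
      refine Finset.sum_congr rfl fun p hp => ?_
      obtain ⟨i, j⟩ := p
      have hij : i + j = n := Finset.HasAntidiagonal.mem_antidiagonal.1 hp
      subst hij
      simp only
      rw [aux_two, ho, hu]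
      have hv : 2 ^ s2 i * 2 ^ s2 j
          = 2 ^ s2 (i + j) * 2 ^ padicValNat 2 ((i + j).choose i) := by
        rw [← pow_add, ← pow_add, ← aux_val, add_comm]
      calc (i + j).choose i ^ 2 * (2 ^ s2 i * u i * (2 ^ s2 j * o j))
          = (i + j).choose i ^ 2 * (2 ^ s2 i * 2 ^ s2 j) * (u i * o j) := by ring
        _ = _ := by rw [hv]; ring
    · rw [← ZMod.natCast_eq_natCast_iff]
      push_cast
      rw [(Commute.all (m : ZMod 2) 1).add_pow']
      refine Finset.sum_congr rfl fun p hp => ?_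
      obtain ⟨i, j⟩ := p
      have hij : i + j = n := Finset.HasAntidiagonal.mem_antidiagonal.1 hp
      subst hij
      have hu' : (u i : ZMod 2) = (m : ZMod 2) ^ i := by
        have := (ZMod.natCast_eq_natCast_iff _ _ _).2 (hu2 i)
        simpa using this
      have ho' : (o j : ZMod 2) = 1 := by
        have := (ZMod.natCast_eq_natCast_iff (o j) 1 2).2 (ho2 j)
        simpa using this
      have hc' : ((i + j).choose i : ZMod 2) ^ 2 * 2 ^ padicValNat 2 ((i + j).choose i)
          = ((i + j).choose i : ZMod 2) := by
        by_cases hd : 2 ∣ (i + j).choose i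
        · rw [(ZMod.natCast_eq_zero_iff _ _).2 hd]
          simp
        · rw [padicValNat.eq_zero_of_not_dvd hd]
          have : ∀ x : ZMod 2, x ^ 2 * 2 ^ 0 = x := by decide
          exact this _
      simp only
      rw [hc', hu', ho']
      simp

theorem stmt_1 (d n : ℕ) (hd : 0 < d) (hd2 : padicValNat 2 d = 1) (hn : 0 < n) :
    padicValNat 2 (W d n) = 2 * s2 n := by
  obtain ⟨m, hm, hm2⟩ := aux_odd d hd.ne'
  rw [hd2, pow_one] at hm
  obtain ⟨u, hu, hu2⟩ := aux_main m n
  have hmn : m ^ n % 2 = 1 := Nat.odd_iff.1 ((Nat.odd_iff.2 hm2).pow)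
  have hu3 : u % 2 = 1 := Eq.trans hu2 hmn
  have hu0 : u ≠ 0 := by rintro rfl; simp at hu3
  unfold W
  rw [hm, hu, padicValNat.mul (Nat.choose_pos (by omega)).ne'
    (mul_ne_zero (by positivity) hu0), aux_central,
    padicValNat.mul (by positivity) hu0, padicValNat.prime_pow,
    padicValNat.eq_zero_of_not_dvd (by omega : ¬ 2 ∣ u)]
  omega
end

section
/- Let d be a positive integer with ν₂(d) = 2 (i.e., d ≡ 4 (mod 8)) and let n be a positive integer. Then ν₂(W_d(n)) ≥ 3·s₂(n). -/
theorem s2_double (n : ℕ) : s2 (2 * n) = s2 n := by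
  unfold s2
  rcases Nat.eq_zero_or_pos n with rfl | h
  · simp
  · have := Nat.digits_add_two_add_one 0 (2 * n - 1)
    rw [show 2 * n - 1 + 1 = 2 * n by omega] at this
    simp only [zero_add] at this
    rw [this]
    simp

theorem s2_double_add_one (n : ℕ) : s2 (2 * n + 1) = s2 n + 1 := by
  unfold s2
  have := Nat.digits_add_two_add_one 0 (2 * n)
  simp only [zero_add] at this
  rw [this, show (2 * n + 1) / 2 = n by omega, show (2 * n + 1) % 2 = 1 by omega]
  simp [add_comm]

theorem s2_add_le (a b : ℕ) : s2 (a + b) ≤ s2 a + s2 b := by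
  induction hm : a + b using Nat.strong_induction_on generalizing a b with
  | _ m ih =>
    subst hm
    by_cases h0 : a + b = 0
    · have ha : a = 0 := by omega
      have hb : b = 0 := by omega
      subst ha hb; simp
    have one : s2 1 = 1 := by simp [s2]
    rcases Nat.even_or_odd' a with ⟨x, rfl | rfl⟩ <;> rcases Nat.even_or_odd' b with ⟨y, rfl | rfl⟩
    · rw [← mul_add, s2_double, s2_double, s2_double]
      exact ih _ (by omega) _ _ rfl
    · rw [← add_assoc, ← mul_add, s2_double, s2_double_add_one, s2_double_add_one]
      have := ih (x + y) (by omega) _ _ rfl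
      omega
    · rw [show 2 * x + 1 + 2 * y = 2 * (x + y) + 1 by ring, s2_double, s2_double_add_one,
        s2_double_add_one]
      have := ih (x + y) (by omega) _ _ rfl
      omega
    · rw [show 2 * x + 1 + (2 * y + 1) = 2 * (x + y + 1) by ring, s2_double, s2_double_add_one,
        s2_double_add_one]
      have h1 := ih (x + y) (by omega) _ _ rfl
      have h2 := ih (x + y + 1) (by omega) (x + y) 1 rfl
      omega

theorem s2_le (n : ℕ) : s2 n ≤ n := Nat.digit_sum_le 2 n

/-- Kummer. -/
theorem choose_dvd (a b e : ℕ) (h : e + s2 (a + b) ≤ s2 a + s2 b) :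
    2 ^ e ∣ (a + b).choose a := by
  have hk := @sub_one_mul_padicValNat_choose_eq_sub_sum_digits 2 a (a + b) ⟨Nat.prime_two⟩
    (Nat.le_add_right a b)
  rw [Nat.add_sub_cancel_left] at hk
  have hne : (a + b).choose a ≠ 0 := (Nat.choose_pos (Nat.le_add_right a b)).ne'
  haveI : Fact (Nat.Prime 2) := ⟨Nat.prime_two⟩
  rw [padicValNat_dvd_iff_le hne]
  unfold s2 at h
  omega

theorem choose_dvd' (a b : ℕ) : 2 ^ (s2 a + s2 b - s2 (a + b)) ∣ (a + b).choose a :=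
  choose_dvd a b _ (by have := s2_add_le a b; omega)

theorem central_dvd (a : ℕ) : 2 ^ (s2 a) ∣ (2 * a).choose a := by
  rw [two_mul]
  apply choose_dvd
  rw [← two_mul, s2_double]

open MvPolynomial in
theorem coeff_step (D K n : ℕ) (m : Fin 4 →₀ ℕ) (Z A B : MvPolynomial (Fin 4) ℕ)
    (h : ∀ i j, i + j = n → D ∣ (K * (i + j).choose i) * coeff m (Z * (A ^ i * B ^ j))) :
    D ∣ K * coeff m (Z * (A + B) ^ n) := by
  rw [(Commute.all A B).add_pow', Finset.mul_sum, coeff_sum, Finset.mul_sum]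
  apply Finset.dvd_sum
  rintro ⟨i, j⟩ hij
  have hij' : i + j = n := by simpa using hij
  have := h i j hij'
  rw [hij'] at this
  rw [mul_smul_comm, coeff_smul, smul_eq_mul, ← mul_assoc]
  exact this

open MvPolynomial in
theorem coeff_mon (n p q r s : ℕ) :
    coeff (Finsupp.equivFunOnFinite.symm (fun _ => n) : Fin 4 →₀ ℕ)
      (X 0 ^ p * X 1 ^ q * X 2 ^ r * X 3 ^ s : MvPolynomial (Fin 4) ℕ) =
    if p = n ∧ q = n ∧ r = n ∧ s = n then 1 else 0 := by
  simp only [X_pow_eq_monomial, monomial_mul, coeff_monomial, one_mul]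
  congr 1
  simp [Finsupp.ext_iff, Fin.forall_fin_succ, Finsupp.single_apply]

open MvPolynomial in
theorem coeff_PQR (D K h a b c n : ℕ)
    (hD : ∀ α β γ, a = 2 * α → b = 2 * β → c = 2 * γ →
      D ∣ K * (2 * α).choose α * (2 * β).choose β * (2 * γ).choose γ) :
    D ∣ K * coeff (Finsupp.equivFunOnFinite.symm (fun _ => n) : Fin 4 →₀ ℕ)
      ((X 0 * X 1 * X 2 * X 3) ^ h * (X 0 * X 1 + X 2 * X 3) ^ a * (X 0 * X 2 + X 1 * X 3) ^ b
        * (X 0 * X 3 + X 1 * X 2) ^ c) := by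
  apply coeff_step
  intro g g' hg
  rw [mul_right_comm (_ * _) (_ ^ b) (_ * _)]
  apply coeff_step
  intro f f' hf
  rw [mul_right_comm _ (_ ^ a) (_ * _), mul_right_comm _ (_ ^ a) (_ * _)]
  apply coeff_step
  intro e e' he
  have := coeff_mon n (h + e + f + g) (h + e + f' + g') (h + e' + f + g') (h + e' + f' + g)
  rw [show ((X 0 * X 1 * X 2 * X 3) ^ h * ((X 0 * X 3) ^ g * (X 1 * X 2) ^ g') *
      ((X 0 * X 2) ^ f * (X 1 * X 3) ^ f') * ((X 0 * X 1) ^ e * (X 2 * X 3) ^ e') :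
      MvPolynomial (Fin 4) ℕ) = X 0 ^ (h + e + f + g) * X 1 ^ (h + e + f' + g') *
      X 2 ^ (h + e' + f + g') * X 3 ^ (h + e' + f' + g) by ring, this]
  split_ifs with hc
  · obtain rfl : e' = e := by omega
    obtain rfl : f' = f := by omega
    obtain rfl : g' = g := by omega
    have := hD e' f' g' (by omega) (by omega) (by omega)
    simp only [← two_mul, mul_one]
    convert this using 1
    ring
  · simp

theorem s2_three_even (x y z : ℕ) : 3 * s2 (2 * x + (2 * y + 2 * z)) ≤
    s2 (2 * x) + s2 (2 * y) + s2 (2 * z) + s2 (x + z) + s2 (x + y) + s2 (y + z) := by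
  rw [show 2 * x + (2 * y + 2 * z) = 2 * (x + y + z) by ring]
  simp only [s2_double]
  have h1 := s2_add_le (x + y) z
  have h2 := s2_add_le (x + z) y
  have h3 := s2_add_le (y + z) x
  rw [show x + z + y = x + y + z by ring] at h2
  rw [show y + z + x = x + y + z by ring] at h3
  omega

theorem s2_three_odd (x y z : ℕ) : 3 * s2 (2 * x + 1 + (2 * y + 1 + (2 * z + 1))) ≤
    s2 (2 * x + 1) + s2 (2 * y + 1) + s2 (2 * z + 1) +
      s2 (x + z + 1) + s2 (x + y + 1) + s2 (y + z + 1) := by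
  rw [show 2 * x + 1 + (2 * y + 1 + (2 * z + 1)) = 2 * (x + y + z + 1) + 1 by ring]
  simp only [s2_double_add_one]
  have h1 := s2_add_le (x + y + 1) z
  have h2 := s2_add_le (x + z + 1) y
  have h3 := s2_add_le (y + z + 1) x
  rw [show x + y + 1 + z = x + y + z + 1 by ring] at h1
  rw [show x + z + 1 + y = x + y + z + 1 by ring] at h2
  rw [show y + z + 1 + x = x + y + z + 1 by ring] at h3
  omega

theorem s2_three (i j l α β γ : ℕ) (h1 : i + l = 2 * α) (h2 : i + j = 2 * β)
    (h3 : j + l = 2 * γ) :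
    3 * s2 (i + (j + l)) ≤ s2 i + s2 j + s2 l + s2 α + s2 β + s2 γ := by
  rcases Nat.even_or_odd' i with ⟨x, rfl | rfl⟩
  · obtain ⟨y, rfl⟩ : ∃ y, j = 2 * y := ⟨j / 2, by omega⟩
    obtain ⟨z, rfl⟩ : ∃ y, l = 2 * y := ⟨l / 2, by omega⟩
    have := s2_three_even x y z
    obtain rfl : α = x + z := by omega
    obtain rfl : β = x + y := by omega
    obtain rfl : γ = y + z := by omega
    exact this
  · obtain ⟨y, rfl⟩ : ∃ y, j = 2 * y + 1 := ⟨j / 2, by omega⟩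
    obtain ⟨z, rfl⟩ : ∃ y, l = 2 * y + 1 := ⟨l / 2, by omega⟩
    have := s2_three_odd x y z
    obtain rfl : α = x + z + 1 := by omega
    obtain rfl : β = x + y + 1 := by omega
    obtain rfl : γ = y + z + 1 := by omega
    exact this

open MvPolynomial in
theorem coeff_resolvent (n : ℕ) :
    2 ^ (2 * s2 n) ∣ coeff (Finsupp.equivFunOnFinite.symm (fun _ => n) : Fin 4 →₀ ℕ)
      ((4 * (X 0 * X 1 * X 2 * X 3) +
        ((X 0 * X 1 + X 2 * X 3) * (X 0 * X 2 + X 1 * X 3) +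
        ((X 0 * X 2 + X 1 * X 3) * (X 0 * X 3 + X 1 * X 2) +
        (X 0 * X 3 + X 1 * X 2) * (X 0 * X 1 + X 2 * X 3)))) ^ n : MvPolynomial (Fin 4) ℕ) := by
  rw [← one_mul (coeff _ _), ← one_mul ((_ : MvPolynomial (Fin 4) ℕ) ^ n)]
  apply coeff_step
  intro h m hm
  rw [← mul_assoc]
  apply coeff_step
  intro i t ht
  rw [← mul_assoc]
  apply coeff_step
  intro j l hl
  generalize hP : (X 0 * X 1 + X 2 * X 3 : MvPolynomial (Fin 4) ℕ) = P
  generalize hQ : (X 0 * X 2 + X 1 * X 3 : MvPolynomial (Fin 4) ℕ) = Q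
  generalize hR : (X 0 * X 3 + X 1 * X 2 : MvPolynomial (Fin 4) ℕ) = R
  rw [show (1 * (4 * (X 0 * X 1 * X 2 * X 3)) ^ h * (P * Q) ^ i * ((Q * R) ^ j * (R * P) ^ l) :
      MvPolynomial (Fin 4) ℕ) = C (4 ^ h) * ((X 0 * X 1 * X 2 * X 3) ^ h * P ^ (i + l) *
        Q ^ (i + j) * R ^ (j + l)) by
      rw [map_pow, show (C 4 : MvPolynomial (Fin 4) ℕ) = 4 from rfl]; ring, coeff_C_mul,
      ← mul_assoc]
  subst hP hQ hR
  apply coeff_PQR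
  intro α β γ h1 h2 h3
  have hs := s2_three i j l α β γ h1 h2 h3
  subst hl ht hm
  have d1 := choose_dvd' h (i + (j + l))
  have d2 := choose_dvd' i (j + l)
  have d3 := choose_dvd' j l
  have a1 := s2_add_le h (i + (j + l))
  have a2 := s2_add_le i (j + l)
  have a3 := s2_add_le j l
  have hh := s2_le h
  have d4 : 2 ^ (2 * h) ∣ 4 ^ h := by rw [pow_mul]; norm_num
  have := mul_dvd_mul (mul_dvd_mul (mul_dvd_mul (mul_dvd_mul (mul_dvd_mul (mul_dvd_mul
    d1 d2) d3) d4) (central_dvd α)) (central_dvd β)) (central_dvd γ)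
  simp only [← pow_add] at this
  rw [one_mul]
  refine (pow_dvd_pow 2 ?_).trans this
  omega

open MvPolynomial in
theorem Wstar_four (n : ℕ) :
    Wstar 4 n = coeff (Finsupp.equivFunOnFinite.symm (fun _ => n) : Fin 4 →₀ ℕ)
      ((∑ i : Fin 4, X i) ^ n *
        (∑ i : Fin 4, ![X 1 * X 2 * X 3, X 0 * X 2 * X 3, X 0 * X 1 * X 3, X 0 * X 1 * X 2] i) ^ n
        : MvPolynomial (Fin 4) ℕ) := by
  rw [Finset.sum_pow_eq_sum_piAntidiag, Finset.sum_pow_eq_sum_piAntidiag,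
    Finset.piAntidiag_univ_fin_eq_antidiagonalTuple, Wstar, Finset.sum_mul_sum, coeff_sum]
  refine Finset.sum_congr rfl fun k hk => ?_
  rw [coeff_sum, Finset.sum_eq_single k]
  · rw [Finset.Nat.mem_antidiagonalTuple] at hk
    simp only [Fin.prod_univ_four, Fin.sum_univ_four] at hk ⊢
    have := coeff_mon n (k 0 + k 1 + k 2 + k 3) (k 0 + k 1 + k 2 + k 3) (k 0 + k 1 + k 2 + k 3)
      (k 0 + k 1 + k 2 + k 3)
    rw [if_pos (by simp [hk])] at this
    generalize Nat.multinomial Finset.univ k = M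
    simp only [← C_eq_coe_nat, Nat.cast_id]
    simp only [Matrix.cons_val]
    trans coeff (Finsupp.equivFunOnFinite.symm (fun _ => n) : Fin 4 →₀ ℕ) (C (M ^ 2) *
      (X 0 ^ (k 0 + k 1 + k 2 + k 3) * X 1 ^ (k 0 + k 1 + k 2 + k 3) *
      X 2 ^ (k 0 + k 1 + k 2 + k 3) * X 3 ^ (k 0 + k 1 + k 2 + k 3)))
    · rw [coeff_C_mul, this, mul_one]
    · congr 1
      rw [map_pow]
      ring
  · intro l hl hlk
    rw [Finset.Nat.mem_antidiagonalTuple] at hk hl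
    simp only [Fin.prod_univ_four, Fin.sum_univ_four] at hk hl ⊢
    have := coeff_mon n (k 0 + l 1 + l 2 + l 3) (l 0 + k 1 + l 2 + l 3) (l 0 + l 1 + k 2 + l 3)
      (l 0 + l 1 + l 2 + k 3)
    rw [if_neg] at this
    · generalize Nat.multinomial Finset.univ k = M
      generalize Nat.multinomial Finset.univ l = M'
      simp only [← C_eq_coe_nat, Nat.cast_id]
      simp only [Matrix.cons_val]
      trans coeff (Finsupp.equivFunOnFinite.symm (fun _ => n) : Fin 4 →₀ ℕ) (C (M * M') *
        (X 0 ^ (k 0 + l 1 + l 2 + l 3) * X 1 ^ (l 0 + k 1 + l 2 + l 3) *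
        X 2 ^ (l 0 + l 1 + k 2 + l 3) * X 3 ^ (l 0 + l 1 + l 2 + k 3)))
      · congr 1
        rw [map_mul]
        ring
      · rw [coeff_C_mul, this, mul_zero]
    · rintro ⟨h0, h1, h2, h3⟩
      apply hlk
      funext t
      fin_cases t <;> simp <;> omega
  · intro h
    exact absurd hk h

theorem Wstar_four_dvd (n : ℕ) : 2 ^ (2 * s2 n) ∣ Wstar 4 n := by
  rw [Wstar_four, ← mul_pow]
  convert coeff_resolvent n using 3
  simp only [Fin.sum_univ_four, Matrix.cons_val]
  ring

/-- The series `∑ x ^ n / n! ^ 2`. -/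
noncomputable def besselSeries : PowerSeries ℚ := PowerSeries.mk fun n => 1 / (n.factorial : ℚ) ^ 2

theorem coeff_bessel_pow (d n : ℕ) :
    PowerSeries.coeff n (besselSeries ^ d) * (n.factorial : ℚ) ^ 2 = Wstar d n := by
  have h : besselSeries ^ d = ∏ _j : Fin d, besselSeries := by simp
  rw [h, PowerSeries.coeff_prod, Wstar, Finset.sum_mul, Nat.cast_sum]
  refine Finset.sum_bij (fun l _ => ⇑l) ?_ ?_ ?_ ?_
  · intro l hl
    rw [Finset.mem_finsuppAntidiag] at hl
    rw [Finset.Nat.mem_antidiagonalTuple]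
    exact hl.1
  · intro a _ b _ hab
    exact DFunLike.coe_injective hab
  · intro b hb
    rw [Finset.Nat.mem_antidiagonalTuple] at hb
    refine ⟨Finsupp.equivFunOnFinite.symm b, ?_, by simp⟩
    rw [Finset.mem_finsuppAntidiag]
    exact ⟨by simpa using hb, Finset.subset_univ _⟩
  · intro l hl
    rw [Finset.mem_finsuppAntidiag] at hl
    have hs := Nat.multinomial_spec Finset.univ l
    rw [hl.1] at hs
    rw [← hs]
    simp only [besselSeries, PowerSeries.coeff_mk]
    push_cast
    rw [mul_pow, ← mul_assoc, ← Finset.prod_pow, ← Finset.prod_mul_distrib]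
    rw [Finset.prod_eq_one, one_mul]
    intro i _
    have : ((l i).factorial : ℚ) ≠ 0 := by exact_mod_cast (Nat.factorial_ne_zero _)
    field_simp

def GoodSeries (G : PowerSeries ℚ) : Prop :=
  ∀ n, ∃ c : ℕ, PowerSeries.coeff n G * (n.factorial : ℚ) ^ 2 = (2 ^ (2 * s2 n) * c : ℕ)

theorem GoodSeries.mul {F G : PowerSeries ℚ} (hF : GoodSeries F) (hG : GoodSeries G) :
    GoodSeries (F * G) := by
  intro n
  choose f hf using hF
  choose g hg using hG
  have key : PowerSeries.coeff n (F * G) * (n.factorial : ℚ) ^ 2 =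
      ((∑ p ∈ Finset.HasAntidiagonal.antidiagonal n, ((n.choose p.1) ^ 2 * (2 ^ (2 * s2 p.1) * f p.1) *
        (2 ^ (2 * s2 p.2) * g p.2)) : ℕ) : ℚ) := by
    rw [PowerSeries.coeff_mul, Finset.sum_mul, Nat.cast_sum]
    refine Finset.sum_congr rfl ?_
    rintro ⟨i, j⟩ hij
    have hij' : i + j = n := by simpa using hij
    subst hij'
    rw [Nat.cast_mul, Nat.cast_mul, ← hf, ← hg, ← Nat.add_choose_mul_factorial_mul_factorial i j,
      Nat.choose_symm_add]
    push_cast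
    ring
  have hd : 2 ^ (2 * s2 n) ∣ ∑ p ∈ Finset.HasAntidiagonal.antidiagonal n,
      ((n.choose p.1) ^ 2 * (2 ^ (2 * s2 p.1) * f p.1) * (2 ^ (2 * s2 p.2) * g p.2)) := by
    apply Finset.dvd_sum
    rintro ⟨i, j⟩ hij
    have hij' : i + j = n := by simpa using hij
    subst hij'
    have := s2_add_le i j
    have h2 : 2 ^ (2 * s2 (i + j)) ∣ 2 ^ (2 * s2 i + 2 * s2 j) := pow_dvd_pow 2 (by omega)
    refine h2.trans ⟨(i + j).choose i ^ 2 * f i * g j, ?_⟩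
    simp only []
    ring
  obtain ⟨c, hc⟩ := hd
  exact ⟨c, by rw [key, hc]⟩

theorem Wstar_mul_four_dvd (m n : ℕ) : 2 ^ (2 * s2 n) ∣ Wstar (4 * (m + 1)) n := by
  have h4 : GoodSeries (besselSeries ^ 4) := by
    intro n
    obtain ⟨c, hc⟩ := Wstar_four_dvd n
    exact ⟨c, by rw [coeff_bessel_pow, hc]⟩
  have hm : GoodSeries (besselSeries ^ (4 * (m + 1))) := by
    induction m with
    | zero => simpa using h4
    | succ m ih =>
      rw [show 4 * (m + 1 + 1) = 4 * (m + 1) + 4 by ring, pow_add]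
      exact ih.mul h4
  obtain ⟨c, hc⟩ := hm n
  rw [coeff_bessel_pow] at hc
  exact ⟨c, by exact_mod_cast hc⟩

theorem Wstar_pos (d n : ℕ) (hd : 0 < d) : 0 < Wstar d n := by
  unfold Wstar
  apply Finset.sum_pos
  · intro x _
    exact pow_pos (Nat.multinomial_pos _ _) 2
  · refine ⟨Pi.single ⟨0, hd⟩ n, ?_⟩
    rw [Finset.Nat.mem_antidiagonalTuple]
    simp

theorem stmt_2 (d n : ℕ) (hd : 0 < d) (hd2 : padicValNat 2 d = 2) (hn : 0 < n) :
    3 * s2 n ≤ padicValNat 2 (W d n) := by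
  haveI : Fact (Nat.Prime 2) := ⟨Nat.prime_two⟩
  have hW : W d n ≠ 0 := by
    unfold W
    exact Nat.mul_ne_zero (Nat.choose_pos (by omega)).ne' (Wstar_pos d n hd).ne'
  rw [← padicValNat_dvd_iff_le hW]
  have h4 : 2 ^ 2 ∣ d := by
    rw [padicValNat_dvd_iff_le hd.ne']
    exact hd2.ge
  obtain ⟨m, rfl⟩ := h4
  obtain ⟨k, rfl⟩ : ∃ k, m = k + 1 := ⟨m - 1, by omega⟩
  have := mul_dvd_mul (central_dvd n) (Wstar_mul_four_dvd k n)
  rw [← pow_add] at this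
  rw [show 3 * s2 n = s2 n + 2 * s2 n by ring]
  exact this
end

section
/- Let d be a positive integer with ν₂(d) = 2 (i.e., d ≡ 4 (mod 8)) and let n be a positive integer. Then ν₂(W_d(n)) = 3·s₂(n) if and only if the binary expansion of n does not contain two adjacent 1s, i.e., for every i, n does not have both bit i and bit i+1 equal to 1. -/
namespace Walk

theorem s2_even (q : ℕ) : s2 (2 * q) = s2 q := by
  rcases Nat.eq_zero_or_pos q with rfl | h
  · rfl
  · unfold s2
    rw [Nat.digits_def' (by norm_num) (by omega)]
    have h1 : 2 * q % 2 = 0 := by omega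
    have h2 : 2 * q / 2 = q := by omega
    simp [h2]

theorem s2_odd (q : ℕ) : s2 (2 * q + 1) = s2 q + 1 := by
  unfold s2
  rw [Nat.digits_def' (by norm_num) (by omega)]
  have h1 : (2 * q + 1) % 2 = 1 := by omega
  have h2 : (2 * q + 1) / 2 = q := by omega
  simp only [h1, h2, List.sum_cons]
  ring

theorem s2_zero : s2 0 = 0 := by simp [s2]

theorem v_even (q : ℕ) (h : q ≠ 0) : padicValNat 2 (2 * q) = padicValNat 2 q + 1 := by
  rw [padicValNat.mul (by norm_num) h, padicValNat.self (by norm_num), add_comm]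

theorem v_odd (q : ℕ) : padicValNat 2 (2 * q + 1) = 0 :=
  padicValNat.eq_zero_of_not_dvd (by omega)

theorem v_zero_iff {k : ℕ} (h : k ≠ 0) : padicValNat 2 k = 0 ↔ k % 2 = 1 := by
  rcases Nat.even_or_odd' k with ⟨q, rfl | rfl⟩
  · rw [v_even q (by omega)]; omega
  · rw [v_odd]; omega

/-- Kummer: carries. -/
theorem kummer (k m : ℕ) :
    s2 k + s2 m = s2 (k + m) + padicValNat 2 ((k + m).choose k) := by
  have h := sub_one_mul_padicValNat_choose_eq_sub_sum_digits' (p := 2) (k := k) (n := m)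
  have h2 : s2 (k + m) ≤ s2 k + s2 m := by
    have a := sub_one_mul_padicValNat_factorial (p := 2) (k + m)
    have b := sub_one_mul_padicValNat_factorial (p := 2) k
    have c := sub_one_mul_padicValNat_factorial (p := 2) m
    have a' := Nat.digit_sum_le 2 (k + m)
    have b' := Nat.digit_sum_le 2 k
    have c' := Nat.digit_sum_le 2 m
    have e : padicValNat 2 k.factorial + padicValNat 2 m.factorial
        ≤ padicValNat 2 (k + m).factorial := by
      rw [← padicValNat.mul (Nat.factorial_ne_zero _) (Nat.factorial_ne_zero _)]
      exact padicValNat_dvd_iff_le (Nat.factorial_ne_zero _) |>.1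
        (pow_padicValNat_dvd.trans (Nat.factorial_mul_factorial_dvd_factorial_add k m))
    unfold s2
    omega
  unfold s2 at *
  rw [add_comm m k] at h
  omega

theorem carry_le (k m : ℕ) : s2 (k + m) ≤ s2 k + s2 m := by
  have := kummer k m; omega

theorem carry_v {k m : ℕ} (hk : k ≠ 0) :
    s2 (k + m) + padicValNat 2 (k + m) ≤ s2 k + s2 m + padicValNat 2 k := by
  have h := kummer k m
  obtain ⟨j, rfl⟩ := Nat.exists_eq_succ_of_ne_zero hk
  have e := Nat.add_one_mul_choose_eq (j + m) j
  have e2 := congrArg (padicValNat 2) e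
  have c1 : (j + m).choose j ≠ 0 := (Nat.choose_pos (by omega)).ne'
  have c2 : (j + m).succ.choose j.succ ≠ 0 := (Nat.choose_pos (by omega)).ne'
  rw [padicValNat.mul (by omega) c1, padicValNat.mul c2 (by omega)] at e2
  have e3 : j.succ + m = (j + m).succ := by omega
  simp only [e3, Nat.succ_eq_add_one] at *
  omega

theorem s2_pos {n : ℕ} (h : n ≠ 0) : 1 ≤ s2 n := by
  induction n using Nat.strong_induction_on with
  | _ n ih =>
    rcases Nat.even_or_odd' n with ⟨q, rfl | rfl⟩
    · rw [s2_even]; exact ih q (by omega) (by omega)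
    · rw [s2_odd]; omega

theorem s2_eq_zero {n : ℕ} (h : s2 n = 0) : n = 0 := by
  by_contra h'
  have := s2_pos h'; omega

theorem s2_one_iff {n : ℕ} : s2 n = 1 ↔ n = 2 ^ padicValNat 2 n := by
  induction n using Nat.strong_induction_on with
  | _ n ih =>
    rcases Nat.even_or_odd' n with ⟨q, rfl | rfl⟩
    · rcases Nat.eq_zero_or_pos q with rfl | h
      · simp [s2]
      · rw [s2_even, v_even q (by omega), pow_succ, ih q (by omega)]; omega
    · rw [s2_odd, v_odd]
      constructor
      · intro h
        have := s2_eq_zero (n := q) (by omega)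
        omega
      · intro h
        have : q = 0 := by simpa using h
        subst this; simp [s2]

theorem s2_two_pow (a : ℕ) : s2 (2 ^ a) = 1 := by
  rw [s2_one_iff, padicValNat.prime_pow]

/-- indicator of `2^a (2^i - 1)` -/
def lam (n : ℕ) : ZMod 2 :=
  if n = 0 then 0 else if n % 2 = 0 then lam (n / 2)
  else if n = 1 then 1 else if (n / 2) % 2 = 1 then lam (n / 2) else 0
termination_by n
decreasing_by all_goals omega

/-- indicator of no two adjacent ones -/
def ff (n : ℕ) : ZMod 2 :=
  if n = 0 then 1 else if n % 2 = 0 then ff (n / 2)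
  else if (n / 2) % 2 = 1 then 0 else ff (n / 2)
termination_by n
decreasing_by all_goals omega

theorem lam_zero : lam 0 = 0 := by rw [lam]; simp
theorem lam_even (q : ℕ) : lam (2 * q) = lam q := by
  rcases Nat.eq_zero_or_pos q with rfl | h
  · rfl
  · have h1 : 2 * q % 2 = 0 := by omega
    have h2 : 2 * q / 2 = q := by omega
    rw [lam, if_neg (by omega), if_pos h1, h2]
theorem lam_one : lam 1 = 1 := by rw [lam]; simp
theorem lam_odd (q : ℕ) (hq : q ≠ 0) : lam (2 * q + 1) = if q % 2 = 1 then lam q else 0 := by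
  have h2 : (2 * q + 1) / 2 = q := by omega
  rw [lam, if_neg (by omega), if_neg (by omega), if_neg (by omega), h2]
theorem ff_zero : ff 0 = 1 := by rw [ff]; simp
theorem ff_even (q : ℕ) : ff (2 * q) = ff q := by
  rcases Nat.eq_zero_or_pos q with rfl | h
  · rfl
  · have h1 : 2 * q % 2 = 0 := by omega
    have h2 : 2 * q / 2 = q := by omega
    rw [ff, if_neg (by omega), if_pos h1, h2]
theorem ff_odd (q : ℕ) : ff (2 * q + 1) = if q % 2 = 1 then 0 else ff q := by
  have h2 : (2 * q + 1) / 2 = q := by omega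
  rw [ff, if_neg (by omega), if_neg (by omega), h2]

theorem ff_iff (n : ℕ) :
    ff n = 1 ↔ ∀ i : ℕ, ¬(n.testBit i = true ∧ n.testBit (i + 1) = true) := by
  induction n using Nat.strong_induction_on with
  | _ n ih =>
    rcases Nat.eq_zero_or_pos n with rfl | hn
    · simp [ff_zero]
    rcases Nat.even_or_odd' n with ⟨q, rfl | rfl⟩
    · rw [ff_even, ih q (by omega)]
      constructor
      · intro h i
        cases i with
        | zero => simp
        | succ i =>
          have := h i
          rw [Nat.testBit_succ, Nat.testBit_succ, show 2 * q / 2 = q by omega]; exact this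
      · intro h i
        have := h (i + 1)
        rw [Nat.testBit_succ, Nat.testBit_succ, show 2 * q / 2 = q by omega] at this; exact this
    · have h2 : (2 * q + 1) / 2 = q := by omega
      rw [ff_odd]
      split_ifs with h
      · simp only [zero_ne_one, false_iff, not_forall, not_not]
        refine ⟨0, ?_, ?_⟩
        · simp [Nat.testBit_zero]
        · rw [Nat.testBit_succ, h2]; simp [Nat.testBit_zero, h]
      · rw [ih q (by omega)]
        constructor
        · intro hh i
          cases i with
          | zero => rw [Nat.testBit_succ, h2]; simp [Nat.testBit_zero, h]
          | succ i =>
            have := hh i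
            rw [Nat.testBit_succ, Nat.testBit_succ, h2]; exact this
        · intro hh i
          have := hh (i + 1)
          rw [Nat.testBit_succ, Nat.testBit_succ, h2] at this; exact this

theorem lam_two_pow (a : ℕ) : lam (2 ^ a) = 1 := by
  induction a with
  | zero => simpa using lam_one
  | succ a ih => rw [pow_succ, mul_comm, lam_even, ih]

theorem lamA (k : ℕ) : ∀ m : ℕ, lam k ≠ 0 → lam m ≠ 0 → padicValNat 2 m = padicValNat 2 k + 1 →
    s2 k + s2 m = s2 (k + m) → k = 2 ^ padicValNat 2 k ∧ lam (k + m) = 1 := by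
  induction k using Nat.strong_induction_on with
  | _ k ih =>
    intro m hk hm hv hs
    have hm0 : m ≠ 0 := by rintro rfl; exact hm lam_zero
    have hk0 : k ≠ 0 := by rintro rfl; exact hk lam_zero
    have hme : m % 2 = 0 := by
      by_contra h
      have := (v_zero_iff hm0).2 (by omega)
      omega
    obtain ⟨m', rfl⟩ : ∃ m', m = 2 * m' := ⟨m / 2, by omega⟩
    rcases Nat.even_or_odd' k with ⟨q, rfl | rfl⟩
    · rw [← mul_add, s2_even, s2_even, s2_even] at hs
      rw [v_even _ (by omega), v_even _ (by omega)] at hv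
      rw [lam_even] at hk hm
      have := ih q (by omega) m' hk hm (by omega) hs
      rw [← mul_add, lam_even, v_even _ (by omega), pow_succ]
      exact ⟨by omega, this.2⟩
    · rw [v_odd, v_even _ (by omega)] at hv
      have hm1 := (v_zero_iff (by omega : m' ≠ 0)).1 (by omega)
      rw [show 2 * q + 1 + 2 * m' = 2 * (q + m') + 1 by ring, s2_odd, s2_odd, s2_even] at hs
      rw [lam_even] at hm
      rcases Nat.eq_zero_or_pos q with rfl | hq
      · refine ⟨by simp, ?_⟩
        rw [show 2 * 0 + 1 + 2 * m' = 2 * m' + 1 by ring, lam_odd _ (by omega), if_pos hm1]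
        exact Fin.eq_one_of_ne_zero _ hm
      · exfalso
        rw [lam_odd _ (by omega)] at hk
        have hq1 : q % 2 = 1 := by
          by_contra h
          rw [if_neg h] at hk; exact hk rfl
        have h1 := carry_v (k := q) (m := m') (by omega)
        rw [(v_zero_iff (by omega : q ≠ 0)).2 hq1] at h1
        have : padicValNat 2 (q + m') ≠ 0 := by
          rw [Ne, v_zero_iff (by omega)]; omega
        omega

theorem lamB (n : ℕ) : lam n ≠ 0 → n ≠ 2 ^ padicValNat 2 n → ∃ m, n = 2 ^ padicValNat 2 n + m ∧
    lam m = 1 ∧ padicValNat 2 m = padicValNat 2 n + 1 ∧ 1 + s2 m = s2 n ∧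
    2 ^ padicValNat 2 n < m := by
  induction n using Nat.strong_induction_on with
  | _ n ih =>
    intro hl hn
    have hn0 : n ≠ 0 := by rintro rfl; exact hl lam_zero
    rcases Nat.even_or_odd' n with ⟨q, rfl | rfl⟩
    · rw [lam_even] at hl
      rw [v_even _ (by omega), pow_succ] at hn ⊢
      obtain ⟨m, h1, h2, h3, h4, h5⟩ := ih q (by omega) hl (by omega)
      refine ⟨2 * m, by omega, by rw [lam_even, h2], ?_, ?_, by omega⟩
      · rw [v_even _ (by omega), h3]
      · rw [s2_even, s2_even, h4]
    · rw [v_odd] at hn ⊢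
      have hq : q ≠ 0 := by rintro rfl; simp at hn
      rw [lam_odd _ hq] at hl
      have hq1 : q % 2 = 1 := by
        by_contra h
        rw [if_neg h] at hl; exact hl rfl
      rw [if_pos hq1] at hl
      refine ⟨2 * q, by ring, ?_, ?_, ?_, by simp; omega⟩
      · rw [lam_even]; exact Fin.eq_one_of_ne_zero _ hl
      · rw [v_even _ hq, (v_zero_iff hq).2 hq1]
      · rw [s2_even, s2_odd]; ring

/-- the sum in the recurrence for `ff` -/
theorem ff_rec (n : ℕ) (hn : n ≠ 0) :
    ∑ p ∈ Finset.HasAntidiagonal.antidiagonal n, (if p.1 ≠ 0 ∧ s2 p.1 + s2 p.2 = s2 n ∧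
      padicValNat 2 p.1 = padicValNat 2 n then lam p.1 * ff p.2 else 0) = ff n := by
  induction n using Nat.strong_induction_on with
  | _ n ih =>
    rcases Nat.even_or_odd' n with ⟨q, rfl | rfl⟩
    · rw [ff_even, ← ih q (by omega) (by omega)]
      symm
      refine Finset.sum_of_injOn (fun p => (2 * p.1, 2 * p.2)) ?_ ?_ ?_ ?_
      · rintro ⟨a, b⟩ _ ⟨c, d⟩ _ h
        simp only [Prod.mk.injEq] at h ⊢; omega
      · rintro ⟨a, b⟩ h
        simp only [Finset.mem_coe, Finset.HasAntidiagonal.mem_antidiagonal] at h ⊢; omega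
      · rintro ⟨a, b⟩ h h'
        rw [Finset.HasAntidiagonal.mem_antidiagonal] at h
        simp only at h
        rw [if_neg]
        rintro ⟨h1, -, h3⟩
        simp only at h1 h3
        apply h'
        rw [v_even _ (by omega)] at h3
        have : ¬ a % 2 = 1 := by rw [← v_zero_iff h1]; omega
        refine ⟨(a / 2, b / 2), ?_, ?_⟩
        · simp only [Finset.mem_coe, Finset.HasAntidiagonal.mem_antidiagonal]; omega
        · simp only [Prod.mk.injEq]; omega
      · rintro ⟨a, b⟩ h
        rw [Finset.HasAntidiagonal.mem_antidiagonal] at h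
        simp only at h ⊢
        rw [s2_even, s2_even, s2_even, lam_even, ff_even]
        by_cases ha : a = 0
        · simp [ha]
        · rw [v_even _ ha, v_even _ (by omega)]
          simp [ha]
    · have key : ∑ p ∈ Finset.HasAntidiagonal.antidiagonal q, (if s2 p.1 + s2 p.2 = s2 q then
          lam (2 * p.1 + 1) * ff p.2 else 0) = ff (2 * q + 1) := by
        have hsplit : ∀ p ∈ Finset.HasAntidiagonal.antidiagonal q, (if s2 p.1 + s2 p.2 = s2 q then
          lam (2 * p.1 + 1) * ff p.2 else 0) = (if p = (0, q) then ff q else 0) +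
          (if p.1 % 2 = 1 ∧ s2 p.1 + s2 p.2 = s2 q then lam p.1 * ff p.2 else 0) := by
          rintro ⟨a, b⟩ h
          rw [Finset.HasAntidiagonal.mem_antidiagonal] at h
          simp only at h
          rcases Nat.eq_zero_or_pos a with rfl | ha
          · have : b = q := by omega
            subst this
            simp [s2_zero, lam_one]
          · have : ¬ a = 0 := by omega
            rw [lam_odd _ (by omega)]
            simp only [Prod.mk.injEq, this, false_and, if_false, zero_add]
            split_ifs <;> simp_all
        rw [Finset.sum_congr rfl hsplit, Finset.sum_add_distrib, Finset.sum_ite_eq' , if_pos (by simp), ff_odd]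
        split_ifs with h
        · rw [← ih q (by omega) (by omega)]
          rw [← Finset.sum_add_distrib]
          apply Finset.sum_eq_zero
          rintro ⟨a, b⟩ -
          rw [(v_zero_iff (by omega : q ≠ 0)).2 h]
          simp only
          by_cases ha : a = 0
          · simp [ha]
          · simp only [v_zero_iff ha]
            by_cases h1 : a % 2 = 1 <;> by_cases h2 : s2 a + s2 b = s2 q <;> simp [ha, h1, h2, CharTwo.add_self_eq_zero]
        · rw [Finset.sum_eq_zero, add_zero]
          rintro ⟨a, b⟩ hab
          rw [Finset.HasAntidiagonal.mem_antidiagonal] at hab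
          simp only at hab ⊢
          rw [if_neg]
          rintro ⟨h1, h2⟩
          have h3 := carry_v (k := a) (m := b) (by omega)
          rw [(v_zero_iff (by omega : a ≠ 0)).2 h1, hab] at h3
          have : padicValNat 2 q ≠ 0 := by
            rw [Ne, v_zero_iff (by omega)]; omega
          omega
      rw [← key]
      symm
      refine Finset.sum_of_injOn (fun p => (2 * p.1 + 1, 2 * p.2)) ?_ ?_ ?_ ?_
      · rintro ⟨a, b⟩ _ ⟨c, d⟩ _ h
        simp only [Prod.mk.injEq] at h ⊢; omega
      · rintro ⟨a, b⟩ h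
        simp only [Finset.mem_coe, Finset.HasAntidiagonal.mem_antidiagonal] at h ⊢; omega
      · rintro ⟨a, b⟩ h h'
        rw [Finset.HasAntidiagonal.mem_antidiagonal] at h
        simp only at h
        rw [if_neg]
        rintro ⟨h1, -, h3⟩
        simp only at h1 h3
        apply h'
        rw [v_odd, v_zero_iff h1] at h3
        refine ⟨(a / 2, b / 2), ?_, ?_⟩
        · simp only [Finset.mem_coe, Finset.HasAntidiagonal.mem_antidiagonal]; omega
        · simp only [Prod.mk.injEq]; omega
      · rintro ⟨a, b⟩ h
        rw [Finset.HasAntidiagonal.mem_antidiagonal] at h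
        simp only at h ⊢
        rw [s2_even, s2_odd, s2_odd, v_odd, v_odd, ff_even]
        have : s2 a + 1 + s2 b = s2 q + 1 ↔ s2 a + s2 b = s2 q := by omega
        simp [this]

theorem v_add_lt (k : ℕ) : ∀ m : ℕ, k ≠ 0 → m ≠ 0 → padicValNat 2 k < padicValNat 2 m →
    padicValNat 2 (k + m) = padicValNat 2 k := by
  induction k using Nat.strong_induction_on with
  | _ k ih =>
    intro m hk hm h
    have hme : m % 2 = 0 := by
      by_contra h
      have := (v_zero_iff hm).2 (by omega)
      omega
    obtain ⟨m', rfl⟩ : ∃ m', m = 2 * m' := ⟨m / 2, by omega⟩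
    rcases Nat.even_or_odd' k with ⟨q, rfl | rfl⟩
    · rw [v_even _ (by omega), v_even _ (by omega)] at h
      rw [← mul_add, v_even _ (by omega), v_even _ (by omega),
        ih q (by omega) m' (by omega) (by omega) (by omega)]
    · rw [show 2 * q + 1 + 2 * m' = 2 * (q + m') + 1 by ring, v_odd, v_odd]

/-- `x` is `2^e` times a 2-adic integer congruent to `b` mod 2 -/
def C (e : ℕ) (b : ZMod 2) (x : ℚ) : Prop :=
  ∃ a o : ℤ, (o : ZMod 2) = 1 ∧ x * o = 2 ^ e * a ∧ (a : ZMod 2) = b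

theorem C_ne {o : ℤ} (h : (o : ZMod 2) = 1) : (o : ℚ) ≠ 0 := by
  intro h'
  have : o = 0 := by exact_mod_cast h'
  subst this
  simp at h

theorem C_zero (e : ℕ) : C e 0 0 := ⟨0, 1, by simp, by simp, by simp⟩

theorem C_add {e : ℕ} {b b' : ZMod 2} {x x' : ℚ} (h : C e b x) (h' : C e b' x') :
    C e (b + b') (x + x') := by
  obtain ⟨a, o, h1, h2, h3⟩ := h
  obtain ⟨a', o', h1', h2', h3'⟩ := h'
  refine ⟨a * o' + a' * o, o * o', ?_, ?_, ?_⟩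
  · push_cast; simp [h1, h1']
  · push_cast; linear_combination o' * h2 + o * h2'
  · push_cast; simp [h1, h1', h3, h3']

theorem C_mul {e e' : ℕ} {b b' : ZMod 2} {x x' : ℚ} (h : C e b x) (h' : C e' b' x') :
    C (e + e') (b * b') (x * x') := by
  obtain ⟨a, o, h1, h2, h3⟩ := h
  obtain ⟨a', o', h1', h2', h3'⟩ := h'
  refine ⟨a * a', o * o', ?_, ?_, ?_⟩
  · push_cast; simp [h1, h1']
  · push_cast; rw [pow_add]; linear_combination (x' * o') * h2 + (2 ^ e * a) * h2'
  · push_cast; simp [h3, h3']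

theorem C_neg {e : ℕ} {b : ZMod 2} {x : ℚ} (h : C e b x) : C e b (-x) := by
  obtain ⟨a, o, h1, h2, h3⟩ := h
  refine ⟨-a, o, h1, ?_, ?_⟩
  · push_cast; linear_combination -h2
  · push_cast; rw [h3, ZMod.neg_eq_self_mod_two]

theorem C_le {e e' : ℕ} {b : ZMod 2} {x : ℚ} (h : C e b x) (hle : e' ≤ e) :
    C e' (if e = e' then b else 0) x := by
  split_ifs with h0
  · subst h0; exact h
  obtain ⟨a, o, h1, h2, h3⟩ := h
  obtain ⟨j, rfl⟩ : ∃ j, e = e' + 1 + j := ⟨e - e' - 1, by omega⟩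
  refine ⟨2 * (2 ^ j * a), o, h1, ?_, ?_⟩
  · push_cast; rw [h2, pow_add, pow_add]; ring
  · have : ((2 : ℤ) : ZMod 2) = 0 := by decide
    rw [Int.cast_mul, this, zero_mul]

theorem C_sum {ι : Type} {e : ℕ} (s : Finset ι) (b : ι → ZMod 2) (x : ι → ℚ)
    (h : ∀ i ∈ s, C e (b i) (x i)) : C e (∑ i ∈ s, b i) (∑ i ∈ s, x i) := by
  classical
  induction s using Finset.induction_on with
  | empty => simpa using C_zero e
  | insert i s hi ih =>
    rw [Finset.sum_insert hi, Finset.sum_insert hi]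
    exact C_add (h i (by simp)) (ih fun j hj => h j (by simp [hj]))

theorem C_cancel {e f : ℕ} {b : ZMod 2} {x y : ℚ} (hy : C e 1 y) (h : C (f + e) b (y * x)) :
    C f b x := by
  obtain ⟨a, o, h1, h2, h3⟩ := hy
  obtain ⟨a', o', h1', h2', h3'⟩ := h
  refine ⟨a' * o, a * o', ?_, ?_, ?_⟩
  · push_cast; simp [h3, h1']
  · push_cast
    have : (2 : ℚ) ^ e ≠ 0 := by positivity
    apply mul_left_cancel₀ this
    rw [pow_add] at h2'
    linear_combination (- x * o') * h2 + o * h2'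
  · push_cast; simp [h1, h3']

theorem C_unique {e : ℕ} {b b' : ZMod 2} {x : ℚ} (h : C e b x) (h' : C e b' x) : b = b' := by
  obtain ⟨a, o, h1, h2, h3⟩ := h
  obtain ⟨a', o', h1', h2', h3'⟩ := h'
  have h4 : (a : ℚ) * o' = a' * o := by
    have : (2 : ℚ) ^ e ≠ 0 := by positivity
    apply mul_left_cancel₀ this
    linear_combination - o' * h2 + o * h2'
  have h5 : a * o' = a' * o := by exact_mod_cast h4
  have := congrArg (fun z : ℤ => (z : ZMod 2)) h5
  push_cast at this
  rw [h1, h1', h3, h3'] at this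
  simpa using this

theorem C_nat {n : ℕ} (hn : n ≠ 0) : C (padicValNat 2 n) 1 (n : ℚ) := by
  refine ⟨(n / 2 ^ padicValNat 2 n : ℕ), 1, by simp, ?_, ?_⟩
  · have h : 2 ^ padicValNat 2 n * (n / 2 ^ padicValNat 2 n) = n :=
      Nat.mul_div_cancel' pow_padicValNat_dvd
    have h2 := congrArg (fun z : ℕ => (z : ℚ)) h
    push_cast at h2 ⊢
    rw [mul_one]
    exact_mod_cast h.symm
  · have h : ¬ 2 ∣ n / 2 ^ padicValNat 2 n := by
      intro h
      have h1 := mul_dvd_mul_left (2 ^ padicValNat 2 n) h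
      rw [Nat.mul_div_cancel' pow_padicValNat_dvd, ← pow_succ] at h1
      exact pow_succ_padicValNat_not_dvd hn h1
    rw [Int.cast_natCast]
    apply Fin.eq_one_of_ne_zero
    intro hz
    exact h ((ZMod.natCast_eq_zero_iff _ _).1 hz)

theorem C_one_iff {e n : ℕ} {b : ZMod 2} (hn : n ≠ 0) (h : C e b (n : ℚ)) :
    padicValNat 2 n = e ↔ b = 1 := by
  have h1 := C_nat hn
  constructor
  · rintro rfl; exact C_unique h h1
  · rintro rfl
    rcases lt_trichotomy (padicValNat 2 n) e with h2 | h2 | h2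
    · have := C_le h h2.le
      rw [if_neg h2.ne'] at this
      exact absurd (C_unique this h1) (by decide)
    · exact h2
    · have := C_le h1 h2.le
      rw [if_neg h2.ne'] at this
      exact absurd (C_unique this h) (by decide)

theorem T1 {k m : ℕ} (hk : k ≠ 0) (hm : m ≠ 0) :
    4 * s2 (k + m) + padicValNat 2 (k + m) + (padicValNat 2 (k + m) + 2) ≤
      1 + (4 * s2 k + padicValNat 2 k) + (4 * s2 m + padicValNat 2 m) ∧
    (1 + (4 * s2 k + padicValNat 2 k) + (4 * s2 m + padicValNat 2 m) =
      4 * s2 (k + m) + padicValNat 2 (k + m) + (padicValNat 2 (k + m) + 2) →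
      s2 k + s2 m = s2 (k + m) ∧ (padicValNat 2 m = padicValNat 2 k + 1 ∨
        padicValNat 2 k = padicValNat 2 m + 1)) := by
  have h1 := carry_le k m
  have h2 := carry_v (k := k) (m := m) hk
  rcases lt_trichotomy (padicValNat 2 k) (padicValNat 2 m) with h | h | h
  · have := v_add_lt k m hk hm h
    omega
  · have h3 : padicValNat 2 k < padicValNat 2 (k + m) := by
      have : 2 ^ (padicValNat 2 k + 1) ∣ k + m := by
        have a1 : 2 ^ padicValNat 2 k ∣ k := pow_padicValNat_dvd
        have a2 : 2 ^ padicValNat 2 k ∣ m := by rw [h]; exact pow_padicValNat_dvd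
        obtain ⟨x, hx⟩ := a1
        obtain ⟨y, hy⟩ := a2
        have b1 : ¬ 2 ^ (padicValNat 2 k + 1) ∣ k := pow_succ_padicValNat_not_dvd hk
        have b2 : ¬ 2 ^ (padicValNat 2 k + 1) ∣ m := by
          rw [h]; exact pow_succ_padicValNat_not_dvd hm
        generalize padicValNat 2 k = t at *
        subst hx hy
        rw [pow_succ, Nat.mul_dvd_mul_iff_left (by positivity)] at b1 b2
        rw [pow_succ, ← mul_add, Nat.mul_dvd_mul_iff_left (by positivity)]
        omega
      exact (padicValNat_dvd_iff_le (by omega)).1 this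
    omega
  · have := v_add_lt m k hm hk h
    rw [add_comm m k] at this
    omega

theorem T1' {k m : ℕ} (hkm : k < m) (hl : lam k * lam m ≠ 0)
    (h : 1 + (4 * s2 k + padicValNat 2 k) + (4 * s2 m + padicValNat 2 m) =
      4 * s2 (k + m) + padicValNat 2 (k + m) + (padicValNat 2 (k + m) + 2)) :
    lam (k + m) = 1 ∧ k = 2 ^ padicValNat 2 (k + m) := by
  have hl1 := left_ne_zero_of_mul hl
  have hl2 := right_ne_zero_of_mul hl
  have hk : k ≠ 0 := by rintro rfl; exact hl1 lam_zero
  have hm : m ≠ 0 := by omega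
  obtain ⟨h1, h2 | h2⟩ := (T1 hk hm).2 h
  · have := lamA k m hl1 hl2 h2 h1
    rw [v_add_lt k m hk hm (by omega)]
    exact ⟨this.2, this.1⟩
  · exfalso
    have := lamA m k hl2 hl1 h2 (by rw [add_comm m k]; omega)
    have h3 : 2 ^ padicValNat 2 k ≤ k := Nat.le_of_dvd (by omega) pow_padicValNat_dvd
    rw [h2, pow_succ] at h3
    have := this.1
    omega

theorem C_two : C 1 1 2 := ⟨1, 1, by simp, by norm_num, by simp⟩

open Finset.HasAntidiagonal in
theorem h_main (h : ℕ → ℚ) (h0 : h 0 = 0)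
    (hr : ∀ n : ℕ, 4 * n * h n + ∑ p ∈ antidiagonal n, h p.1 * h p.2 = if n = 1 then 64 else 0) :
    ∀ n : ℕ, n ≠ 0 → C (4 * s2 n + padicValNat 2 n) (lam n) (h n) := by
  intro n
  induction n using Nat.strong_induction_on with
  | _ n ih =>
    intro hn
    by_cases hn1 : n = 1
    · subst hn1
      have := hr 1
      have e : antidiagonal 1 = {(0, 1), (1, 0)} := by decide
      rw [e] at this
      simp [h0] at this
      have h16 : h 1 = 16 := by linarith
      rw [h16, lam_one]
      exact ⟨1, 1, by simp, by norm_num [s2], by simp⟩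
    have hsum := hr n
    rw [if_neg hn1] at hsum
    have hsplit : ∑ p ∈ antidiagonal n, h p.1 * h p.2 =
        ∑ p ∈ (antidiagonal n).filter (fun p => p.1 < p.2), 2 * h p.1 * h p.2 +
        ∑ p ∈ (antidiagonal n).filter (fun p => p.1 = p.2), h p.1 * h p.2 := by
      have e1 : ∑ p ∈ (antidiagonal n).filter (fun p => p.1 < p.2), h p.1 * h p.2 =
          ∑ p ∈ (antidiagonal n).filter (fun p => p.2 < p.1), h p.1 * h p.2 := by
        refine Finset.sum_nbij' Prod.swap Prod.swap ?_ ?_ ?_ ?_ ?_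
        · rintro ⟨a, b⟩ hp; simp at hp ⊢; omega
        · rintro ⟨a, b⟩ hp; simp at hp ⊢; omega
        · rintro ⟨a, b⟩ hp; rfl
        · rintro ⟨a, b⟩ hp; rfl
        · rintro ⟨a, b⟩ hp; simp [mul_comm]
      have e2 : ∑ p ∈ (antidiagonal n).filter (fun p => p.1 < p.2), 2 * h p.1 * h p.2 =
          ∑ p ∈ (antidiagonal n).filter (fun p => p.1 < p.2), h p.1 * h p.2 +
          ∑ p ∈ (antidiagonal n).filter (fun p => p.2 < p.1), h p.1 * h p.2 := by
        rw [← e1, ← Finset.sum_add_distrib]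
        exact Finset.sum_congr rfl fun p _ => by ring
      rw [e2, Finset.sum_filter, Finset.sum_filter, Finset.sum_filter, ← Finset.sum_add_distrib,
        ← Finset.sum_add_distrib]
      refine Finset.sum_congr rfl ?_
      rintro ⟨a, b⟩ -
      rcases lt_trichotomy a b with hab | hab | hab
      · simp [hab, hab.not_gt, hab.ne]
      · simp [hab]
      · simp [hab, hab.not_gt, hab.ne']
    set E := 4 * s2 n + padicValNat 2 n + (padicValNat 2 n + 2) with hE
    have hB1 := C_sum (e := E) ((antidiagonal n).filter (fun p => p.1 < p.2))
      (fun p => if 1 + (4 * s2 p.1 + padicValNat 2 p.1) + (4 * s2 p.2 + padicValNat 2 p.2) = E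
        then lam p.1 * lam p.2 else 0) (fun p => 2 * h p.1 * h p.2) (by
      rintro ⟨a, b⟩ hp
      simp only [Finset.mem_filter, mem_antidiagonal] at hp ⊢
      by_cases ha : a = 0
      · subst ha; simp [h0, lam_zero, C_zero]
      have h1 := ih a (by omega) ha
      have h2 := ih b (by omega) (by omega)
      have h3 := C_mul (C_mul C_two h1) h2
      have h4 := T1 (k := a) (m := b) ha (by omega)
      rw [hp.1] at h4
      rw [one_mul] at h3
      exact C_le h3 h4.1)
    have hB2 := C_sum (e := E) ((antidiagonal n).filter (fun p => p.1 = p.2))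
      (fun p => if s2 p.1 = 1 then lam p.1 * lam p.2 else 0) (fun p => h p.1 * h p.2) (by
      rintro ⟨a, b⟩ hp
      simp only [Finset.mem_filter, mem_antidiagonal] at hp ⊢
      obtain ⟨hp1, rfl⟩ := hp
      have ha : a ≠ 0 := by omega
      have h1 := ih a (by omega) ha
      have h3 := C_mul h1 h1
      have hs := s2_pos ha
      have hs2 : s2 n = s2 a := by rw [← hp1, ← two_mul, s2_even]
      have hv2 : padicValNat 2 n = padicValNat 2 a + 1 := by rw [← hp1, ← two_mul, v_even _ ha]
      have h4 := C_le (e' := E) h3 (by omega)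
      have : (4 * s2 a + padicValNat 2 a + (4 * s2 a + padicValNat 2 a) = E) ↔ s2 a = 1 := by omega
      simpa only [this] using h4)
    have hC := C_neg (C_add hB1 hB2)
    rw [← hsplit] at hC
    have h4n : C (padicValNat 2 n + 2) 1 (4 * n : ℚ) := by
      have := C_mul (C_nat hn) (C_mul C_two C_two)
      rw [one_mul, one_mul] at this
      have e : (4 * n : ℚ) = n * (2 * 2) := by ring
      rw [e]
      exact this
    apply C_cancel h4n
    have e4 : (4 * n : ℚ) * h n = -∑ p ∈ antidiagonal n, h p.1 * h p.2 := by linarith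
    rw [e4]
    convert hC using 1
    symm
    by_cases hpow : n = 2 ^ padicValNat 2 n
    · have hs1 := s2_one_iff.2 hpow
      rw [Finset.sum_eq_zero, zero_add]
      · obtain ⟨q, hq⟩ : ∃ q, n = 2 * q := by
          rcases Nat.even_or_odd' n with ⟨q, hq | hq⟩
          · exact ⟨q, hq⟩
          · exfalso
            rw [hq, v_odd] at hpow
            omega
        have hs2 : s2 q = 1 := by rw [hq, s2_even] at hs1; exact hs1
        have hl : lam q = 1 := by rw [s2_one_iff.1 hs2]; exact lam_two_pow _
        rw [Finset.sum_eq_single (q, q)]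
        · simp [hs2, hl, hq, lam_even]
        · rintro ⟨a, b⟩ hp hne
          simp only [Finset.mem_filter, mem_antidiagonal, ne_eq, Prod.mk.injEq] at hp hne
          omega
        · intro hne
          exfalso; apply hne
          simp [hq]; omega
      · rintro ⟨a, b⟩ hp
        simp only [Finset.mem_filter, mem_antidiagonal] at hp ⊢
        by_cases ha : a = 0
        · simp [ha, lam_zero]
        rw [if_neg]
        intro hh
        have h4 := T1 (k := a) (m := b) ha (by omega)
        rw [hp.1] at h4
        have := (h4.2 hh).1
        have := s2_pos ha
        have := s2_pos (n := b) (by omega)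
        omega
    · rw [add_comm, Finset.sum_eq_zero, zero_add]
      · by_cases hl : lam n = 0
        · rw [hl]
          apply Finset.sum_eq_zero
          rintro ⟨a, b⟩ hp
          simp only [Finset.mem_filter, mem_antidiagonal] at hp ⊢
          split_ifs with hh
          · by_contra hne
            have := T1' hp.2 hne (by rw [hp.1]; exact hh)
            rw [hp.1, hl] at this
            exact absurd this.1 (by decide)
          · rfl
        · obtain ⟨m, h1, h2, h3, h4, h5⟩ := lamB n hl hpow
          rw [Finset.sum_eq_single (2 ^ padicValNat 2 n, m)]
          · simp only [h2, lam_two_pow, h3, s2_two_pow, padicValNat.prime_pow]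
            rw [if_pos (by omega), Fin.eq_one_of_ne_zero _ hl]
            rfl
          · rintro ⟨a, b⟩ hp hne
            simp only [Finset.mem_filter, mem_antidiagonal, ne_eq, Prod.mk.injEq] at hp hne ⊢
            split_ifs with hh
            · by_contra hne'
              have := T1' hp.2 hne' (by rw [hp.1]; exact hh)
              rw [hp.1] at this
              have := this.2
              omega
            · rfl
          · intro hne
            exfalso; apply hne
            simp only [Finset.mem_filter, mem_antidiagonal]
            omega
      · rintro ⟨a, b⟩ hp
        simp only [Finset.mem_filter, mem_antidiagonal] at hp ⊢
        rw [if_neg]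
        intro hh
        apply hpow
        rw [← s2_one_iff, ← hp.1, ← hp.2, ← two_mul, s2_even, hh]

open Finset.HasAntidiagonal in
theorem c_main (h c : ℕ → ℚ) (d' : ℕ) (hd' : d' % 2 = 1) (h0 : h 0 = 0) (c0 : c 0 = 1)
    (hh : ∀ n : ℕ, n ≠ 0 → C (4 * s2 n + padicValNat 2 n) (lam n) (h n))
    (hr : ∀ n : ℕ, n * c n = d' * ∑ p ∈ antidiagonal n, h p.1 * c p.2) :
    ∀ n : ℕ, C (4 * s2 n) (ff n) (c n) := by
  intro n
  induction n using Nat.strong_induction_on with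
  | _ n ih =>
    by_cases hn : n = 0
    · subst hn
      rw [c0, ff_zero]
      exact ⟨1, 1, by simp, by norm_num [s2], by simp⟩
    have hB := C_sum (e := 4 * s2 n + padicValNat 2 n) (antidiagonal n)
      (fun p => if p.1 ≠ 0 ∧ s2 p.1 + s2 p.2 = s2 n ∧
        padicValNat 2 p.1 = padicValNat 2 n then lam p.1 * ff p.2 else 0)
      (fun p => h p.1 * c p.2) (by
      rintro ⟨a, b⟩ hp
      simp only [mem_antidiagonal] at hp ⊢
      by_cases ha : a = 0
      · subst ha; simp [h0, C_zero]
      have h3 := C_mul (hh a ha) (ih b (by omega))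
      have k1 := carry_le a b
      have k2 := carry_v (k := a) (m := b) ha
      rw [hp] at k1 k2
      have h4 := C_le (e' := 4 * s2 n + padicValNat 2 n) h3 (by omega)
      have : (4 * s2 a + padicValNat 2 a + 4 * s2 b = 4 * s2 n + padicValNat 2 n) ↔
          (a ≠ 0 ∧ s2 a + s2 b = s2 n ∧ padicValNat 2 a = padicValNat 2 n) := by omega
      simpa only [this] using h4)
    rw [ff_rec n hn] at hB
    apply C_cancel (C_nat hn)
    rw [hr n]
    have hdd := C_nat (n := d') (by omega)
    rw [(v_zero_iff (by omega)).2 hd'] at hdd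
    simpa using C_mul hdd hB

open Finset.HasAntidiagonal in
theorem tuple_sum (d n : ℕ) (g : ℕ → ℚ) :
    ∑ x ∈ Finset.Nat.antidiagonalTuple d n, ∏ i, g (x i) =
      PowerSeries.coeff n (PowerSeries.mk g ^ d) := by
  induction d generalizing n with
  | zero =>
    cases n with
    | zero => simp
    | succ n => simp [PowerSeries.coeff_one]
  | succ d ih =>
    rw [pow_succ', PowerSeries.coeff_mul]
    simp only [← ih, PowerSeries.coeff_mk, Finset.mul_sum]
    rw [Finset.sum_sigma']
    refine Finset.sum_bij' (fun x _ => ⟨(x 0, n - x 0), Fin.tail x⟩)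
      (fun y _ => Fin.cons y.1.1 y.2) ?_ ?_ ?_ ?_ ?_
    · intro x hx
      simp only [Finset.Nat.mem_antidiagonalTuple, Finset.mem_sigma, mem_antidiagonal] at hx ⊢
      rw [Fin.sum_univ_succ] at hx
      simp only [Fin.tail]
      omega
    · rintro ⟨⟨a, b⟩, y⟩ hy
      simp only [Finset.Nat.mem_antidiagonalTuple, Finset.mem_sigma, mem_antidiagonal] at hy ⊢
      rw [Fin.sum_univ_succ]
      simp only [Fin.cons_zero, Fin.cons_succ]
      omega
    · intro x hx
      simp
    · rintro ⟨⟨a, b⟩, y⟩ hy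
      simp only [Finset.Nat.mem_antidiagonalTuple, Finset.mem_sigma, mem_antidiagonal] at hy
      have : n - a = b := by omega
      simp [this]
    · intro x hx
      rw [Fin.prod_univ_succ]
      rfl

/-- coefficients of the Bessel type series -/
def bes (n : ℕ) : ℚ := 4 ^ n / (n.factorial : ℚ) ^ 2

theorem Wstar_eq (d n : ℕ) :
    (Wstar d n : ℚ) * 4 ^ n = (n.factorial : ℚ) ^ 2 *
      PowerSeries.coeff n (PowerSeries.mk bes ^ d) := by
  rw [← tuple_sum, Wstar, Nat.cast_sum, Finset.sum_mul, Finset.mul_sum]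
  refine Finset.sum_congr rfl ?_
  intro x hx
  rw [Finset.Nat.mem_antidiagonalTuple] at hx
  have h := Nat.multinomial_spec Finset.univ x
  rw [hx] at h
  have h2 : (∏ i, ((x i).factorial : ℚ)) * Nat.multinomial Finset.univ x = n.factorial := by
    exact_mod_cast h
  have h3 : (∏ i, ((x i).factorial : ℚ)) ≠ 0 :=
    Finset.prod_ne_zero_iff.2 fun i _ => by exact_mod_cast Nat.factorial_ne_zero _
  simp only [bes, Finset.prod_div_distrib, Finset.prod_pow, Finset.prod_pow_eq_pow_sum, hx]
  rw [← h2]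
  push_cast
  field_simp

open PowerSeries in
theorem rec_exists : ∃ h : ℕ → ℚ, h 0 = 0 ∧
    (∀ n : ℕ, 4 * n * h n + ∑ p ∈ Finset.HasAntidiagonal.antidiagonal n, h p.1 * h p.2
      = if n = 1 then 64 else 0) ∧
    (∀ d' n : ℕ, n * coeff n (mk bes ^ (4 * d')) =
      d' * ∑ p ∈ Finset.HasAntidiagonal.antidiagonal n, h p.1 * coeff p.2 (mk bes ^ (4 * d'))) := by
  set F : ℚ⟦X⟧ := mk bes with hF
  let D := PowerSeries.derivative ℚ
  have hth : ∀ (f : ℚ⟦X⟧) (n : ℕ), coeff n (X * D f) = n * coeff n f := by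
    intro f n
    cases n with
    | zero => simp
    | succ n => rw [coeff_succ_X_mul, coeff_derivative]; push_cast; ring
  have hF0 : constantCoeff F ≠ 0 := by
    rw [← coeff_zero_eq_constantCoeff_apply, hF, coeff_mk]; simp [bes]
  have hFne : F ≠ 0 := by
    intro h; rw [h] at hF0; simp at hF0
  have hinv : F⁻¹ * F = 1 := PowerSeries.inv_mul_cancel F hF0
  set G : ℚ⟦X⟧ := X * D F * F⁻¹ with hG
  have hGF : X * D F = G * F := by rw [hG, mul_assoc, hinv, mul_one]
  have hode : X * D (X * D F) = 4 * X * F := by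
    ext n
    rw [hth, hth, mul_comm (4 : ℚ⟦X⟧) X, mul_assoc]
    cases n with
    | zero => simp
    | succ n =>
      rw [coeff_succ_X_mul]
      have : (4 : ℚ⟦X⟧) = PowerSeries.C (4 : ℚ) := (map_ofNat _ 4).symm
      rw [this, coeff_C_mul, hF, coeff_mk, coeff_mk, bes, bes, Nat.factorial_succ]
      have h1 : (n.factorial : ℚ) ≠ 0 := by exact_mod_cast Nat.factorial_ne_zero _
      have h2 : ((n : ℚ) + 1) ≠ 0 := by positivity
      push_cast
      field_simp
      ring
  have hric : X * D G + G * G = 4 * X := by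
    apply mul_right_cancel₀ hFne
    rw [← hode, hGF]
    simp only [D, Derivation.leibniz, smul_eq_mul]
    linear_combination (-G) * hGF
  refine ⟨fun n => 4 * coeff n G, ?_, ?_, ?_⟩
  · simp [hG]
  · intro n
    have := congrArg (coeff n) hric
    rw [map_add, hth, coeff_mul n G G] at this
    have e : coeff n (4 * X : ℚ⟦X⟧) = if n = 1 then 4 else 0 := by
      have : (4 : ℚ⟦X⟧) = PowerSeries.C (4 : ℚ) := (map_ofNat _ 4).symm
      rw [this, coeff_C_mul, coeff_X]; simp
    rw [e] at this
    have e2 : ∑ p ∈ Finset.HasAntidiagonal.antidiagonal n, (4 * coeff p.1 G) * (4 * coeff p.2 G) =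
        16 * ∑ p ∈ Finset.HasAntidiagonal.antidiagonal n, coeff p.1 G * coeff p.2 G := by
      rw [Finset.mul_sum]
      exact Finset.sum_congr rfl fun p _ => by ring
    rw [e2]
    beta_reduce
    split_ifs at this ⊢ <;> linarith
  · intro d' n
    rw [← hth]
    have : X * D (F ^ (4 * d')) = (4 * d' : ℕ) • (G * F ^ (4 * d')) := by
      rcases Nat.eq_zero_or_pos d' with rfl | hd
      · simp [D]
      · obtain ⟨j, hj⟩ : ∃ j, 4 * d' = j + 1 := ⟨4 * d' - 1, by omega⟩
        rw [hj]
        simp only [D, Derivation.leibniz_pow, smul_eq_mul, nsmul_eq_mul]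
        simp only [Nat.add_sub_cancel]
        linear_combination ((j + 1 : ℕ) : ℚ⟦X⟧) * F ^ j * hGF
    rw [this, map_nsmul, coeff_mul, nsmul_eq_mul, Finset.mul_sum, Finset.mul_sum]
    refine Finset.sum_congr rfl fun p _ => ?_
    push_cast
    ring

theorem Wstar_pos {d : ℕ} (hd : 0 < d) (n : ℕ) : Wstar d n ≠ 0 := by
  unfold Wstar
  apply Nat.ne_of_gt
  apply Finset.sum_pos
  · intro x _
    have := Nat.multinomial_pos Finset.univ x
    positivity
  · obtain ⟨e, rfl⟩ : ∃ e, d = e + 1 := ⟨d - 1, by omega⟩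
    exact ⟨Fin.cons n 0, by rw [Finset.Nat.mem_antidiagonalTuple, Fin.sum_univ_succ]; simp⟩

theorem main (d n : ℕ) (hd : 0 < d) (hd2 : padicValNat 2 d = 2) :
    padicValNat 2 (W d n) = 3 * s2 n ↔ ff n = 1 := by
  obtain ⟨d', rfl⟩ : ∃ d', d = 4 * d' := by
    have : 2 ^ padicValNat 2 d ∣ d := pow_padicValNat_dvd
    rw [hd2] at this
    exact this
  have hodd : d' % 2 = 1 := by
    rw [show 4 * d' = 2 * (2 * d') by ring, v_even _ (by omega), v_even _ (by omega)] at hd2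
    exact (v_zero_iff (by omega)).1 (by omega)
  obtain ⟨h, h0, h1, h2⟩ := rec_exists
  have hc := c_main h (fun n => PowerSeries.coeff n (PowerSeries.mk bes ^ (4 * d'))) d' hodd h0
    (by simp [bes]) (h_main h h0 h1) (h2 d') n
  have hW := Wstar_eq (4 * d') n
  have hs : Wstar (4 * d') n ≠ 0 := Wstar_pos hd n
  have hf := Nat.factorial_ne_zero n
  have hfv := sub_one_mul_padicValNat_factorial (p := 2) n
  have hfl := Nat.digit_sum_le 2 n
  have hch := kummer n n
  rw [← two_mul, ← two_mul, s2_even] at hch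
  have hcn : (2 * n).choose n ≠ 0 := (Nat.choose_pos (by omega)).ne'
  have hprod := C_mul (C_mul (C_nat hf) (C_nat hf)) hc
  have e1 : (n.factorial : ℚ) * n.factorial *
      PowerSeries.coeff n (PowerSeries.mk bes ^ (4 * d')) = ((Wstar (4 * d') n * 4 ^ n : ℕ) : ℚ) := by
    push_cast; rw [hW]; ring
  simp only [e1, one_mul] at hprod
  have h4 := C_one_iff (mul_ne_zero hs (by positivity)) hprod
  have hv4 : padicValNat 2 (4 ^ n) = 2 * n := by
    rw [show (4 : ℕ) = 2 ^ 2 by norm_num, ← pow_mul, padicValNat.prime_pow]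
  rw [padicValNat.mul hs (by positivity), hv4] at h4
  rw [← h4, W, padicValNat.mul hcn hs]
  unfold s2 at *
  omega

end Walk

theorem stmt_3 (d n : ℕ) (hd : 0 < d) (hd2 : padicValNat 2 d = 2) (hn : 0 < n) :
    padicValNat 2 (W d n) = 3 * s2 n ↔
      ∀ i : ℕ, ¬(n.testBit i = true ∧ n.testBit (i + 1) = true) := by
  rw [Walk.main d n hd hd2, Walk.ff_iff]
end

section
/- Let d be a positive integer with ν₂(d) ≥ 3 and set δ = ν₂(d) − 2. Then for every positive integer n, ν₂(W_d(n)) ≥ 3·s₂(n) + δ. -/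
namespace DW

lemma s2_le (n : ℕ) : s2 n ≤ n := Nat.digit_sum_le 2 n

lemma s2_two_mul (n : ℕ) : s2 (2 * n) = s2 n := by
  rcases Nat.eq_zero_or_pos n with rfl | h
  · simp
  · simp [s2, Nat.digits_base_mul (by norm_num : 1 < 2) h]

lemma s2_zero : s2 0 = 0 := by simp [s2]

lemma val_fact (n : ℕ) : padicValNat 2 n.factorial + s2 n = n := by
  have h := sub_one_mul_padicValNat_factorial (p := 2) n
  have := s2_le n
  simp only [s2] at *
  omega

lemma kummer (k l : ℕ) : padicValNat 2 ((k + l).choose k) + s2 (k + l) = s2 k + s2 l := by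
  have h := Nat.add_choose_mul_factorial_mul_factorial k l
  rw [← Nat.choose_symm_add] at h
  have h1 := congrArg (padicValNat 2) h
  have hc : (k + l).choose k ≠ 0 := (Nat.choose_pos (by omega)).ne'
  rw [padicValNat.mul (mul_ne_zero hc (Nat.factorial_ne_zero _)) (Nat.factorial_ne_zero _),
    padicValNat.mul hc (Nat.factorial_ne_zero _)] at h1
  have := val_fact k
  have := val_fact l
  have := val_fact (k + l)
  omega

lemma s2_add (k l : ℕ) : s2 (k + l) ≤ s2 k + s2 l := by
  have := kummer k l
  omega

lemma s2_pos {n : ℕ} (h : 0 < n) : 0 < s2 n := by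
  by_contra h0
  have h1 := val_fact n
  have := sub_one_mul_padicValNat_factorial_lt_of_ne_zero 2 h.ne'
  omega

lemma dvd_choose (k l : ℕ) :
    2 ^ (padicValNat 2 ((k + l).choose k)) ∣ (k + l).choose k := pow_padicValNat_dvd

lemma central (k : ℕ) : 2 ^ s2 k ∣ (2 * k).choose k := by
  have h := dvd_choose k k
  have h2 := kummer k k
  rw [← two_mul, s2_two_mul] at h2
  rw [← two_mul] at h
  rwa [show padicValNat 2 ((2 * k).choose k) = s2 k by omega] at h

/-- The generating series `∑ z^n / n!^2`. -/
noncomputable def G : PowerSeries ℚ := PowerSeries.mk fun n => 1 / ((n.factorial : ℚ)) ^ 2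

lemma coeff_G_pow (d n : ℕ) :
    PowerSeries.coeff n (G ^ d) = (Wstar d n : ℚ) / (n.factorial : ℚ) ^ 2 := by
  have h1 : G ^ d = ∏ _i : Fin d, G := by simp
  rw [h1, PowerSeries.coeff_prod, Wstar]
  push_cast
  rw [Finset.sum_div]
  refine Finset.sum_bij' (fun l _ => (l : Fin d → ℕ)) (fun x _ => Finsupp.equivFunOnFinite.symm x)
    ?_ ?_ ?_ ?_ ?_
  · intro l hl
    simpa [Finset.Nat.mem_antidiagonalTuple] using hl
  · intro l hl
    simpa [Finset.Nat.mem_antidiagonalTuple] using hl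
  · intro l hl
    ext; simp
  · intro l hl
    ext; simp
  · intro l hl
    have hs : ∑ i, l i = n := by simpa using hl
    have h := Nat.multinomial_spec Finset.univ (l : Fin d → ℕ)
    rw [hs] at h
    have h' : (∏ i, ((l i).factorial : ℚ)) * (Nat.multinomial Finset.univ (l : Fin d → ℕ) : ℚ)
        = (n.factorial : ℚ) := by exact_mod_cast h
    have hp : (∏ i, ((l i).factorial : ℚ)) ≠ 0 :=
      Finset.prod_ne_zero_iff.mpr fun i _ => by exact_mod_cast Nat.factorial_ne_zero _
    have hn : (n.factorial : ℚ) ≠ 0 := by exact_mod_cast Nat.factorial_ne_zero _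
    simp only [G, PowerSeries.coeff_mk]
    rw [Finset.prod_div_distrib, Finset.prod_pow]
    simp only [Finset.prod_const_one]
    rw [div_eq_div_iff (pow_ne_zero _ hp) (pow_ne_zero _ hn), ← h']
    ring

lemma Wstar_add (a b n : ℕ) :
    Wstar (a + b) n = ∑ x ∈ Finset.HasAntidiagonal.antidiagonal n,
      (n.choose x.1) ^ 2 * (Wstar a x.1 * Wstar b x.2) := by
  have h := coeff_G_pow (a + b) n
  rw [pow_add, PowerSeries.coeff_mul] at h
  have hn : (n.factorial : ℚ) ≠ 0 := by exact_mod_cast Nat.factorial_ne_zero _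
  rw [eq_div_iff (pow_ne_zero _ hn), Finset.sum_mul] at h
  have : (Wstar (a + b) n : ℚ) = ∑ x ∈ Finset.HasAntidiagonal.antidiagonal n,
      ((n.choose x.1) ^ 2 * (Wstar a x.1 * Wstar b x.2) : ℚ) := by
    rw [← h]
    refine Finset.sum_congr rfl ?_
    rintro ⟨k, l⟩ hx
    obtain rfl : k + l = n := by simpa using hx
    have hc : (((k + l).choose k : ℕ) : ℚ) * k.factorial * l.factorial = (k + l).factorial := by
      rw [Nat.choose_symm_add]
      exact_mod_cast Nat.add_choose_mul_factorial_mul_factorial k l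
    have hk : (k.factorial : ℚ) ≠ 0 := by exact_mod_cast Nat.factorial_ne_zero _
    have hl : (l.factorial : ℚ) ≠ 0 := by exact_mod_cast Nat.factorial_ne_zero _
    simp only [coeff_G_pow]
    rw [← hc]
    field_simp
  exact_mod_cast this

lemma Wstar_one (n : ℕ) : Wstar 1 n = 1 := by
  simp [Wstar, Nat.multinomial]
  exact Nat.div_self (Nat.factorial_pos n)

lemma Wstar_two (n : ℕ) : Wstar 2 n = (2 * n).choose n := by
  rw [show 2 = 1 + 1 from rfl, Wstar_add, Finset.Nat.sum_antidiagonal_eq_sum_range_succ_mk]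
  simp only [Wstar_one, mul_one]
  exact Nat.sum_range_choose_sq n

lemma Wstar_zero (d : ℕ) : Wstar d 0 = 1 := by
  simp [Wstar, Finset.Nat.antidiagonalTuple_zero_right, Nat.multinomial]





/-- Laurent polynomials in two variables. -/
abbrev R := AddMonoidAlgebra ℤ (ℤ × ℤ)

/-- Laurent monomial. -/
noncomputable def M (x : ℤ × ℤ) : R := AddMonoidAlgebra.single x 1

/-- Constant term. -/
noncomputable def CT : R →+ ℤ where
  toFun x := x.coeff 0
  map_zero' := by simp
  map_add' := by simp

lemma M_mul (x y : ℤ × ℤ) : M x * M y = M (x + y) := by simp [M]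
lemma M_zero : M 0 = 1 := rfl
lemma M_pow (x : ℤ × ℤ) (n : ℕ) : M x ^ n = M (n • x) := by simp [M]
lemma CT_M (x : ℤ × ℤ) : CT (M x) = if x = 0 then 1 else 0 := by
  change (Finsupp.single x (1 : ℤ)) 0 = _
  rw [Finsupp.single_apply]

lemma CT_nat (c : ℕ) (x : R) : CT ((c : R) * x) = c * CT x := by
  rw [← nsmul_eq_mul, map_nsmul, nsmul_eq_mul]

lemma pow_expand (α β : ℤ × ℤ) (e k : ℕ) :
    (M α * (M β + 1) ^ e) ^ k =
      ∑ r ∈ Finset.range (e * k + 1), (((e * k).choose r : ℕ) : R) * M (k • α + r • β) := by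
  rw [mul_pow, ← pow_mul, add_pow, Finset.mul_sum]
  refine Finset.sum_congr rfl fun r _ => ?_
  rw [← M_mul, ← M_pow, ← M_pow, one_pow]
  ring

lemma CT_prod (α β γ ε : ℤ × ℤ) (e k l f : ℕ) :
    CT ((M α * (M β + 1) ^ e) ^ k * (M γ * (M ε + 1) ^ f) ^ l) =
      ∑ r ∈ Finset.range (e * k + 1), ∑ s ∈ Finset.range (f * l + 1),
        if k • α + r • β + (l • γ + s • ε) = 0 then
          (((e * k).choose r : ℕ) : ℤ) * (((f * l).choose s : ℕ) : ℤ) else 0 := by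
  rw [pow_expand, pow_expand, Finset.sum_mul_sum, map_sum]
  refine Finset.sum_congr rfl fun r _ => ?_
  rw [map_sum]
  refine Finset.sum_congr rfl fun s _ => ?_
  rw [mul_mul_mul_comm, M_mul, ← Nat.cast_mul, CT_nat, CT_M]
  push_cast
  split_ifs <;> simp

noncomputable def a : R := M (-1, -1) * (M (1, 1) + 1) ^ 2
noncomputable def b : R := M (-1, 1) * (M (1, -1) + 1) ^ 2
noncomputable def p : R := M (-1, 0) * (M (2, 0) + 1) ^ 1
noncomputable def q : R := M (0, -1) * (M (0, 2) + 1) ^ 1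

lemma uu : M (1, 0) * M (-1, 0) = 1 := by rw [M_mul]; rfl
lemma vv : M (0, 1) * M (0, -1) = 1 := by rw [M_mul]; rfl

lemma a_eq : a = M (1, 0) * M (0, 1) + 2 + M (-1, 0) * M (0, -1) := by
  have e1 : M (-1, -1) = M (-1, 0) * M (0, -1) := by rw [M_mul]; rfl
  have e2 : M (1, 1) = M (1, 0) * M (0, 1) := by rw [M_mul]; rfl
  rw [a, e1, e2]
  linear_combination (M (1, 0) * M (0, 1) + 2) * (M (0, 1) * M (0, -1)) * uu +
    (M (1, 0) * M (0, 1) + 2) * vv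

lemma b_eq : b = M (1, 0) * M (0, -1) + 2 + M (-1, 0) * M (0, 1) := by
  have e1 : M (-1, 1) = M (-1, 0) * M (0, 1) := by rw [M_mul]; rfl
  have e2 : M (1, -1) = M (1, 0) * M (0, -1) := by rw [M_mul]; rfl
  rw [b, e1, e2]
  linear_combination (M (1, 0) * M (0, -1) + 2) * (M (0, 1) * M (0, -1)) * uu +
    (M (1, 0) * M (0, -1) + 2) * vv

lemma p_eq : p = M (1, 0) + M (-1, 0) := by
  have e2 : M (2, 0) = M (1, 0) * M (1, 0) := by rw [M_mul]; rfl
  rw [p, e2]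
  linear_combination M (1, 0) * uu

lemma q_eq : q = M (0, 1) + M (0, -1) := by
  have e2 : M (0, 2) = M (0, 1) * M (0, 1) := by rw [M_mul]; rfl
  rw [q, e2]
  linear_combination M (0, 1) * vv

lemma a_add_b : a + b = p * q + 4 := by
  rw [a_eq, b_eq, p_eq, q_eq]; ring

lemma a_mul_b : a * b = (p + q) ^ 2 := by
  rw [a_eq, b_eq, p_eq, q_eq]
  linear_combination (M (1, 0) ^ 2 + M (-1, 0) ^ 2 - 2) * vv +
    (M (0, 1) ^ 2 + M (0, -1) ^ 2 - 2) * uu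

lemma CT_ab (k l : ℕ) : CT (a ^ k * b ^ l) = ((2 * k).choose k : ℤ) * ((2 * l).choose l : ℤ) := by
  rw [a, b, CT_prod, Finset.sum_eq_single k, Finset.sum_eq_single l, if_pos]
  · simp
  · intro s _ hs
    rw [if_neg]
    simp [Prod.ext_iff]
    omega
  · simp; omega
  · intro r _ hr
    refine Finset.sum_eq_zero fun s _ => ?_
    rw [if_neg]
    simp [Prod.ext_iff]
    omega
  · simp; omega

lemma CT_pq (k l : ℕ) : (2 : ℤ) ^ (s2 k + s2 l) ∣ CT (p ^ k * q ^ l) := by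
  rw [p, q, CT_prod]
  refine Finset.dvd_sum fun r _ => Finset.dvd_sum fun s _ => ?_
  split_ifs with h
  · simp [Prod.ext_iff] at h
    obtain rfl : k = 2 * r := by omega
    obtain rfl : l = 2 * s := by omega
    rw [s2_two_mul, s2_two_mul, one_mul, one_mul, pow_add]
    exact mul_dvd_mul (by exact_mod_cast central r) (by exact_mod_cast central s)
  · simp

open Polynomial in
lemma square_sum {S : Type*} [CommRing S] (a b : S) (n : ℕ) :
    ∑ x ∈ Finset.HasAntidiagonal.antidiagonal n, ((n.choose x.1 : ℕ) : S) ^ 2 * (a ^ x.1 * b ^ x.2) =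
    ∑ x ∈ Finset.HasAntidiagonal.antidiagonal n, ((n.choose x.2 * x.2.choose x.1 : ℕ) : S) *
      ((a * b) ^ x.1 * (a + b) ^ (x.2 - x.1)) := by
  have key : ∀ c : S, ∀ k, (((1 + C c * X : S[X]) ^ n).coeff k) = n.choose k * c ^ k := by
    intro c k
    have : (1 + C c * X : S[X]) ^ n = ((1 + X) ^ n : S[X]).comp (C c * X) := by simp
    rw [this, comp_C_mul_X_coeff, coeff_one_add_X_pow]
  have hL : ((1 + C a * X : S[X]) ^ n * (1 + C b * X) ^ n).coeff n =
      ∑ x ∈ Finset.HasAntidiagonal.antidiagonal n, ((n.choose x.1 : ℕ) : S) ^ 2 * (a ^ x.1 * b ^ x.2) := by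
    rw [coeff_mul]
    refine Finset.sum_congr rfl ?_
    rintro ⟨k, l⟩ hx
    obtain rfl : k + l = n := by simpa using hx
    simp only [key]
    rw [show (k + l).choose l = (k + l).choose k from (Nat.choose_symm_add).symm]
    ring
  rw [← hL, ← mul_pow, show (1 + C a * X : S[X]) * (1 + C b * X) =
    X * (C (a * b) * X + C (a + b)) + 1 by simp only [C_mul, C_add]; ring, add_pow,
    finsetSum_coeff, Finset.Nat.sum_antidiagonal_eq_sum_range_succ_mk, ← Finset.sum_range_reflect]
  refine Finset.sum_congr rfl fun m hm => ?_
  have hm' : m ≤ n := by simpa [Nat.lt_succ_iff] using hm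
  have e1 : n + 1 - 1 - m = n - m := by omega
  simp only [e1]
  rw [one_pow, mul_one, mul_pow, mul_assoc, coeff_X_pow_mul', if_pos (by omega),
    show n - (n - m) = m by omega, ← C_eq_natCast, coeff_mul_C, add_pow, finsetSum_coeff]
  have : ∀ i, ((C (a * b) * X) ^ i * C (a + b) ^ (n - m - i) * (((n - m).choose i : ℕ) : S[X])).coeff m
      = if i = m then (a * b) ^ i * (a + b) ^ (n - m - i) * ((n - m).choose i : ℕ) else 0 := by
    intro i
    have e : (C (a * b) * X) ^ i * C (a + b) ^ (n - m - i) * (((n - m).choose i : ℕ) : S[X]) =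
        C ((a * b) ^ i * (a + b) ^ (n - m - i) * ((n - m).choose i : ℕ)) * X ^ i := by
      simp only [C_mul, C_pow, C_eq_natCast]; ring
    rw [e, coeff_C_mul_X_pow]
    simp only [eq_comm]
  simp only [this]
  rw [Finset.sum_ite_eq']
  split_ifs with h
  · push_cast; ring
  · rw [Nat.choose_eq_zero_of_lt (n := n - m) (k := m)]
    · simp
    · simp at h; omega





lemma T_dvd (j t : ℕ) : (2 : ℤ) ^ (2 * s2 (2 * j + t)) ∣
    (((2 * j + t).choose (j + t) * (j + t).choose j : ℕ) : ℤ) *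
      CT ((p + q) ^ (2 * j) * (p * q + 4) ^ t) := by
  rw [add_pow p q, add_pow (p * q), Finset.sum_mul_sum, map_sum, Finset.mul_sum]
  refine Finset.dvd_sum fun l hl => ?_
  rw [map_sum, Finset.mul_sum]
  refine Finset.dvd_sum fun i hi => ?_
  obtain ⟨l', hl'⟩ : ∃ l', 2 * j = l + l' := ⟨2 * j - l, by simp at hl; omega⟩
  obtain ⟨i', rfl⟩ : ∃ i', t = i + i' := ⟨t - i, by simp at hi; omega⟩
  have e : p ^ l * q ^ (2 * j - l) * (((2 * j).choose l : ℕ) : R) *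
      ((p * q) ^ i * 4 ^ (i + i' - i) * (((i + i').choose i : ℕ) : R)) =
      (((2 * j).choose l * (i + i').choose i * 4 ^ i' : ℕ) : R) *
        (p ^ (i + l) * q ^ (i + l')) := by
    rw [show 2 * j - l = l' by omega, show i + i' - i = i' by omega]
    push_cast
    ring
  rw [e, CT_nat]
  have c1 : (2 * j + (i + i')).choose (j + (i + i')) = (j + (j + (i + i'))).choose j := by
    rw [Nat.choose_symm_add]; congr 1; omega
  have k1 := kummer j (j + (i + i'))
  have k2 := kummer j (i + i')
  have k3 := kummer l l'
  have k4 := kummer i i'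
  have d1 := dvd_choose j (j + (i + i'))
  have d2 := dvd_choose j (i + i')
  have d3 := dvd_choose l l'
  have d4 := dvd_choose i i'
  have d5 := CT_pq (i + l) (i + l')
  have a1 := s2_add (2 * j) i
  have a2 := s2_add (i + l) l'
  have a3 := s2_add (i + l') l
  have a4 := s2_add (2 * j + i) i'
  have a5 := s2_le i'
  have z := s2_two_mul j
  rw [show i + l + l' = 2 * j + i by omega] at a2
  rw [show i + l' + l = 2 * j + i by omega] at a3
  rw [show 2 * j + i + i' = 2 * j + (i + i') by omega] at a4
  rw [← hl'] at k3 d3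
  rw [show j + (j + (i + i')) = 2 * j + (i + i') by omega] at k1 d1 c1
  rw [c1]
  have hN := mul_dvd_mul (mul_dvd_mul d1 d2) (mul_dvd_mul (mul_dvd_mul d3 d4) (dvd_refl (4 ^ i')))
  rw [show (4 : ℕ) = 2 ^ 2 from rfl, ← pow_mul] at hN
  simp only [← pow_add] at hN
  have hZ := mul_dvd_mul (Int.natCast_dvd_natCast.mpr hN) d5
  push_cast at hZ ⊢
  rw [← pow_add] at hZ
  rw [show (4 : ℤ) = 2 ^ 2 from rfl, ← pow_mul, ← mul_assoc]
  refine dvd_trans (pow_dvd_pow 2 ?_) hZ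
  omega

/-- The divisibility property with excess `e`. -/
def Good (d e : ℕ) : Prop := ∀ n, 0 < n → 2 ^ (2 * s2 n + e) ∣ Wstar d n

lemma good_four : Good 4 0 := by
  intro n _
  have h : (Wstar 4 n : ℤ) = CT (∑ x ∈ Finset.HasAntidiagonal.antidiagonal n,
      ((n.choose x.1 : ℕ) : R) ^ 2 * (a ^ x.1 * b ^ x.2)) := by
    rw [show 4 = 2 + 2 from rfl, Wstar_add, map_sum]
    push_cast
    refine Finset.sum_congr rfl fun x _ => ?_
    rw [← Nat.cast_pow (α := R), CT_nat, CT_ab, Wstar_two, Wstar_two]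
    push_cast
    ring
  rw [square_sum, map_sum] at h
  have : (2 : ℤ) ^ (2 * s2 n + 0) ∣ (Wstar 4 n : ℤ) := by
    rw [h, add_zero]
    refine Finset.dvd_sum ?_
    rintro ⟨j, m⟩ hx
    have hx : j + m = n := by simpa using hx
    rw [CT_nat, a_mul_b, a_add_b, ← pow_mul]
    by_cases hjm : j ≤ m
    · obtain ⟨t, rfl⟩ := Nat.exists_eq_add_of_le hjm
      obtain rfl : n = 2 * j + t := by omega
      simpa using T_dvd j t
    · simp [Nat.choose_eq_zero_of_lt (show m < j by omega)]
  exact_mod_cast this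

lemma term_dvd {c d e : ℕ} (hc : Good c e) (hd : Good d e) {k l : ℕ} (h : 0 < k + l) :
    2 ^ (2 * s2 (k + l) + e) ∣ ((k + l).choose k) ^ 2 * (Wstar c k * Wstar d l) := by
  rcases Nat.eq_zero_or_pos k with rfl | hk
  · simpa [Wstar_zero] using hd l (by omega)
  rcases Nat.eq_zero_or_pos l with rfl | hl
  · simpa [Wstar_zero] using hc k (by omega)
  have h1 := mul_dvd_mul (pow_dvd_pow_of_dvd (dvd_choose k l) 2)
    (mul_dvd_mul (hc k hk) (hd l hl))
  rw [← pow_mul, ← pow_add, ← pow_add] at h1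
  refine dvd_trans (pow_dvd_pow 2 ?_) h1
  have := kummer k l
  have := s2_add k l
  omega

lemma good_add {c d e : ℕ} (hc : Good c e) (hd : Good d e) : Good (c + d) e := by
  intro n hn
  rw [Wstar_add]
  refine Finset.dvd_sum ?_
  rintro ⟨k, l⟩ hx
  obtain rfl : k + l = n := by simpa using hx
  exact term_dvd hc hd hn

lemma good_double {d e : ℕ} (hd : Good d e) : Good (d + d) (e + 1) := by
  intro n hn
  rw [Wstar_add]
  set f : ℕ × ℕ → ℕ := fun x => (n.choose x.1) ^ 2 * (Wstar d x.1 * Wstar d x.2) with hf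
  change _ ∣ ∑ x ∈ Finset.HasAntidiagonal.antidiagonal n, f x
  rw [← Finset.sum_filter_add_sum_filter_not _ (fun x : ℕ × ℕ => x.1 = x.2)]
  rw [← Finset.sum_filter_add_sum_filter_not
    (Finset.filter (fun x : ℕ × ℕ => ¬ x.1 = x.2) _) (fun x : ℕ × ℕ => x.1 < x.2)]
  rw [Finset.filter_filter, Finset.filter_filter]
  have hswap : ∑ x ∈ (Finset.HasAntidiagonal.antidiagonal n).filter
        (fun x : ℕ × ℕ => ¬ x.1 = x.2 ∧ ¬ x.1 < x.2), f x =
      ∑ x ∈ (Finset.HasAntidiagonal.antidiagonal n).filter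
        (fun x : ℕ × ℕ => ¬ x.1 = x.2 ∧ x.1 < x.2), f x := by
    refine Finset.sum_bij' (fun x _ => x.swap) (fun x _ => x.swap) ?_ ?_ ?_ ?_ ?_
    · rintro ⟨k, l⟩ hx; simp at hx ⊢; omega
    · rintro ⟨k, l⟩ hx; simp at hx ⊢; omega
    · intros; simp
    · intros; simp
    · rintro ⟨k, l⟩ hx
      simp at hx
      obtain rfl : k + l = n := hx.1
      simp only [hf, Prod.swap]
      rw [Nat.choose_symm_add (a := k) (b := l)]
      ring
  rw [hswap, ← two_mul]
  refine dvd_add ?_ ?_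
  · refine Finset.dvd_sum ?_
    rintro ⟨k, l⟩ hx
    simp at hx
    obtain ⟨rfl, rfl⟩ := hx
    have hk : 0 < k := by omega
    have h1 := mul_dvd_mul (pow_dvd_pow_of_dvd (dvd_choose k k) 2)
      (mul_dvd_mul (hd k hk) (hd k hk))
    rw [← pow_mul, ← pow_add, ← pow_add] at h1
    refine dvd_trans (pow_dvd_pow 2 ?_) h1
    have := kummer k k
    have hs := s2_two_mul k
    rw [two_mul] at hs
    have := s2_pos hk
    omega
  · rw [← add_assoc, pow_succ, mul_comm]
    refine mul_dvd_mul (dvd_refl 2) (Finset.dvd_sum ?_)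
    rintro ⟨k, l⟩ hx
    simp at hx
    obtain rfl : k + l = n := hx.1
    exact term_dvd hd hd hn

lemma good_pow (e : ℕ) : Good (4 * 2 ^ e) e := by
  induction e with
  | zero => exact good_four
  | succ e ih =>
    have := good_double ih
    rwa [← two_mul, show 2 * (4 * 2 ^ e) = 4 * 2 ^ (e + 1) by ring] at this

lemma good_mul {d e : ℕ} (hd : Good d e) (m : ℕ) : Good (d * (m + 1)) e := by
  induction m with
  | zero => simpa using hd
  | succ m ih => exact good_add ih hd

lemma Wstar_pos {d : ℕ} (hd : 0 < d) (n : ℕ) : 0 < Wstar d n := by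
  refine Finset.sum_pos (fun x _ => pow_pos (Nat.multinomial_pos _ _) 2)
    ⟨Pi.single ⟨0, hd⟩ n, ?_⟩
  rw [Finset.Nat.mem_antidiagonalTuple]
  simp

end DW

theorem stmt_4 (d n : ℕ) (hd : 0 < d) (hd2 : 3 ≤ padicValNat 2 d) (hn : 0 < n) :
    3 * s2 n + (padicValNat 2 d - 2) ≤ padicValNat 2 (W d n) := by
  obtain ⟨m, hm⟩ : 2 ^ padicValNat 2 d ∣ d := pow_padicValNat_dvd
  obtain ⟨e, he⟩ : ∃ e, padicValNat 2 d = e + 2 := ⟨padicValNat 2 d - 2, by omega⟩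
  rw [he] at hm ⊢
  have hm0 : m ≠ 0 := by rintro rfl; omega
  obtain ⟨m, rfl⟩ := Nat.exists_eq_succ_of_ne_zero hm0
  have hg : DW.Good d e := by
    have := DW.good_mul (DW.good_pow e) m
    rwa [show 4 * 2 ^ e * (m + 1) = d by rw [hm, Nat.succ_eq_add_one]; ring] at this
  have h := mul_dvd_mul (DW.central n) (hg n hn)
  rw [← pow_add] at h
  have hW : W d n ≠ 0 :=
    mul_ne_zero (Nat.choose_pos (by omega)).ne' (DW.Wstar_pos hd n).ne'
  have h2 := (padicValNat_dvd_iff_le hW).mp h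
  omega
end

section
/- Let g and n be positive integers and let d = 2g. Then W*_d(n) = ∑_{y₁+y₂+⋯+y_g=n, yᵢ ≥ 0} (n!/(y₁!·y₂!⋯y_g!))² · binom(2y₁, y₁)·binom(2y₂, y₂)⋯binom(2y_g, y_g). -/
open PowerSeries in
lemma coeff_pow_tuple (a : ℕ → ℚ) (d : ℕ) : ∀ n : ℕ,
    coeff n ((PowerSeries.mk a) ^ d) =
      ∑ x ∈ Finset.Nat.antidiagonalTuple d n, ∏ i : Fin d, a (x i) := by
  induction d with
  | zero =>
    intro n
    cases n <;> simp [PowerSeries.coeff_one]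
  | succ d ih =>
    intro n
    rw [pow_succ', PowerSeries.coeff_mul]
    have h : ∀ m, ∑ x ∈ Finset.Nat.antidiagonalTuple (d + 1) m, ∏ i : Fin (d + 1), a (x i) =
        ∑ p ∈ Finset.HasAntidiagonal.antidiagonal m, ∑ x ∈ Finset.Nat.antidiagonalTuple d p.2,
          ∏ i : Fin (d + 1), a ((Fin.cons p.1 x : Fin (d + 1) → ℕ) i) := by
      intro m
      rw [Finset.sum_sigma']
      symm
      refine Finset.sum_bij' (fun q _ => (Fin.cons q.1.1 q.2 : Fin (d + 1) → ℕ))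
        (fun x _ => ⟨(x 0, ∑ i, Fin.tail x i), Fin.tail x⟩) ?_ ?_ ?_ ?_ ?_
      · rintro ⟨⟨p, q⟩, x⟩ hx
        simp [Finset.Nat.mem_antidiagonalTuple, Fin.sum_univ_succ] at hx ⊢
        omega
      · intro x hx
        simp [Finset.Nat.mem_antidiagonalTuple, Fin.sum_univ_succ, Fin.tail] at hx ⊢
        exact hx
      · rintro ⟨⟨p, q⟩, x⟩ hx
        simp [Finset.Nat.mem_antidiagonalTuple] at hx ⊢
        exact hx.2
      · intro x hx
        simp
      · intro x hx
        rfl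
    rw [h]
    refine Finset.sum_congr rfl fun p _ => ?_
    simp [ih, Fin.prod_univ_succ, Finset.mul_sum]

lemma multinomial_sq_cast (d n : ℕ) (x : Fin d → ℕ)
    (hx : x ∈ Finset.Nat.antidiagonalTuple d n) :
    ((Nat.multinomial Finset.univ x : ℕ) : ℚ) ^ 2 =
      (n.factorial : ℚ) ^ 2 * ∏ i, (((x i).factorial : ℚ) ^ 2)⁻¹ := by
  rw [Finset.Nat.mem_antidiagonalTuple] at hx
  have h := Nat.multinomial_spec Finset.univ x
  rw [hx] at h
  rw [← h]
  push_cast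
  rw [Finset.prod_inv_distrib, Finset.prod_pow]
  have : (∏ i, ((x i).factorial : ℚ)) ≠ 0 :=
    Finset.prod_ne_zero_iff.2 fun i _ => by positivity
  field_simp

lemma mk_sq : (PowerSeries.mk fun k => (((k.factorial : ℚ) ^ 2)⁻¹)) ^ 2 =
    PowerSeries.mk fun k => (((k.factorial : ℚ) ^ 2)⁻¹) * (Nat.choose (2 * k) k : ℚ) := by
  ext n
  rw [pow_two, PowerSeries.coeff_mul, PowerSeries.coeff_mk, two_mul, Nat.add_choose_eq]
  push_cast
  rw [Finset.mul_sum]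
  refine Finset.sum_congr rfl fun p hp => ?_
  rw [Finset.HasAntidiagonal.mem_antidiagonal] at hp
  subst hp
  rw [PowerSeries.coeff_mk, PowerSeries.coeff_mk, Nat.choose_symm_add]
  have h1 : ((p.1.factorial : ℚ)) ≠ 0 := by positivity
  have h2 : ((p.2.factorial : ℚ)) ≠ 0 := by positivity
  have h3 : (((p.1 + p.2).factorial : ℚ)) ≠ 0 := by positivity
  have h4 : (((p.1 + p.2).choose p.2 : ℕ) : ℚ) =
      (p.1 + p.2).factorial / (p.1.factorial * p.2.factorial) := by
    rw [← Nat.choose_symm_add, Nat.cast_add_choose]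
  rw [h4]
  field_simp

theorem stmt_7 (g n : ℕ) (hg : 0 < g) (hn : 0 < n) :
    Wstar (2 * g) n =
      ∑ y ∈ Finset.Nat.antidiagonalTuple g n,
        (Nat.multinomial Finset.univ y) ^ 2 *
          ∏ i : Fin g, Nat.choose (2 * y i) (y i) := by
  have key := coeff_pow_tuple (fun k => (((k.factorial : ℚ) ^ 2)⁻¹)) (2 * g) n
  rw [pow_mul, mk_sq, coeff_pow_tuple] at key
  have : ((Wstar (2 * g) n : ℕ) : ℚ) = ((∑ y ∈ Finset.Nat.antidiagonalTuple g n,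
        (Nat.multinomial Finset.univ y) ^ 2 *
          ∏ i : Fin g, Nat.choose (2 * y i) (y i) : ℕ) : ℚ) := by
    unfold Wstar
    push_cast
    rw [Finset.sum_congr rfl (fun x hx => multinomial_sq_cast _ _ x hx), ← Finset.mul_sum, ← key,
      Finset.mul_sum]
    refine Finset.sum_congr rfl fun y hy => ?_
    rw [multinomial_sq_cast _ _ y hy, Finset.prod_mul_distrib, mul_assoc]
  exact_mod_cast this
end

section
/- Let n be a positive integer, and let S be the sum of all odd binomial coefficients in the n-th row of Pascal's triangle, i.e., S = ∑_{0 ≤ k ≤ n, binom(n,k) odd} binom(n, k). Then ν₂(S) ≥ s₂(n), with equality if and only if the binary expansion of n does not contain two adjacent 1s, i.e., for every i, n does not have both bit i and bit i+1 equal to 1. -/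
namespace Stmt8

abbrev K := ℚ_[2]

/-- value of a list of bits, least significant first -/
def V : List Bool → ℕ
  | [] => 0
  | b :: l => 2 * V l + b.toNat

/-- Number of ones. -/
def cnt : List Bool → ℕ
  | [] => 0
  | b :: l => cnt l + b.toNat

/-- functions on submasks which are integral polynomials in twice the bits -/
def R : List Bool → (ℕ → K) → Prop
  | [], f => ‖f 0‖ ≤ 1
  | false :: l, f => R l (fun j => f (2 * j))
  | true :: l, f => R l (fun j => f (2 * j)) ∧ R l (fun j => (f (2 * j + 1) - f (2 * j)) / 2)

/-- average over submasks -/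
noncomputable def A : List Bool → (ℕ → K) → K
  | [], f => f 0
  | false :: l, f => A l (fun j => f (2 * j))
  | true :: l, f => A l (fun j => (f (2 * j) + f (2 * j + 1)) / 2)

lemma R_add : ∀ (l : List Bool) (f g : ℕ → K), R l f → R l g → R l (fun j => f j + g j)
  | [], f, g, hf, hg => by
      simp only [R] at *
      exact (Padic.nonarchimedean _ _).trans (max_le hf hg)
  | false :: l, f, g, hf, hg => R_add l _ _ hf hg
  | true :: l, f, g, hf, hg => by
      refine ⟨R_add l _ _ hf.1 hg.1, ?_⟩
      have := R_add l _ _ hf.2 hg.2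
      convert this using 2 with j
      ring

lemma R_const : ∀ (l : List Bool) (c : K), ‖c‖ ≤ 1 → R l (fun _ => c)
  | [], c, hc => hc
  | false :: l, c, hc => R_const l c hc
  | true :: l, c, hc => by
      refine ⟨R_const l c hc, ?_⟩
      simpa using R_const l 0 (by simp)

lemma R_int (l : List Bool) (c : ℤ) : R l (fun _ => (c : K)) :=
  R_const l _ (Padic.norm_int_le_one c)

lemma R_mul : ∀ (l : List Bool) (f g : ℕ → K), R l f → R l g → R l (fun j => f j * g j)
  | [], f, g, hf, hg => by
      simp only [R] at *
      rw [norm_mul]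
      exact mul_le_one₀ hf (norm_nonneg _) hg
  | false :: l, f, g, hf, hg => R_mul l _ _ hf hg
  | true :: l, f, g, hf, hg => by
      refine ⟨R_mul l _ _ hf.1 hg.1, ?_⟩
      have h2 := R_mul l _ _ (R_int l 2) hg.2
      have h3 := R_add l _ _ hg.1 h2
      have := R_add l _ _ (R_mul l _ _ hf.2 h3) (R_mul l _ _ hf.1 hg.2)
      convert this using 2 with j
      push_cast
      ring

lemma R_inv : ∀ (l : List Bool) (f : ℕ → K), R l f → (∀ k, ‖f k‖ = 1) → R l (fun j => (f j)⁻¹)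
  | [], f, hf, h => by
      simp [R, h]
  | false :: l, f, hf, h => R_inv l _ hf (fun k => h _)
  | true :: l, f, hf, h => by
      have h0 := R_inv l _ hf.1 (fun k => h _)
      refine ⟨h0, ?_⟩
      have h3 := R_add l _ _ hf.1 (R_mul l _ _ (R_int l 2) hf.2)
      have h4 : R l (fun j => f (2 * j + 1)) := by
        convert h3 using 2 with j
        push_cast
        ring
      have h5 := R_inv l _ h4 (fun k => h _)
      have := R_mul l _ _ (R_int l (-1)) (R_mul l _ _ hf.2 (R_mul l _ _ h0 h5))
      convert this using 2 with j
      have a : f (2 * j) ≠ 0 := by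
        intro h'; have := h (2 * j); simp [h'] at this
      have b : f (2 * j + 1) ≠ 0 := by
        intro h'; have := h (2 * j + 1); simp [h'] at this
      push_cast
      field_simp
      ring

lemma R_sub (l : List Bool) (f g : ℕ → K) (hf : R l f) (hg : R l g) :
    R l (fun j => f j - g j) := by
  have := R_add l _ _ hf (R_mul l _ _ (R_int l (-1)) hg)
  convert this using 2
  push_cast; ring

lemma R_two : ∀ l : List Bool, R l (fun j => 2 * (j : K))
  | [] => by simp [R]
  | false :: l => by
      have := R_mul l _ _ (R_int l 2) (R_two l)
      simp only [R]
      convert this using 2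
      push_cast; ring
  | true :: l => by
      have := R_mul l _ _ (R_int l 2) (R_two l)
      refine ⟨?_, ?_⟩
      · convert this using 2
        push_cast; ring
      · convert R_int l 1 using 2
        push_cast; ring

lemma A_mem : ∀ (l : List Bool) (f : ℕ → K), R l f → ‖A l f‖ ≤ 1
  | [], f, hf => hf
  | false :: l, f, hf => A_mem l _ hf
  | true :: l, f, hf => by
      have := R_add l _ _ hf.1 hf.2
      refine A_mem l _ ?_
      convert this using 2
      ring

lemma A_lin : ∀ (l : List Bool) (f g : ℕ → K) (c : K),
    A l (fun j => f j + c * g j) = A l f + c * A l g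
  | [], f, g, c => rfl
  | false :: l, f, g, c => A_lin l _ _ c
  | true :: l, f, g, c => by
      simp only [A]
      rw [← A_lin l _ _ c]
      congr 1
      funext j
      ring

lemma norm_two_lt : ‖(2 : K)‖ < 1 := by
  have := Padic.norm_p_lt_one (p := 2)
  simpa using this

/-- congruence mod 2 preserves unit average -/
lemma A_congr (l : List Bool) (f g : ℕ → K) (h : R l (fun j => (f j - g j) / 2))
    (hg : ‖A l g‖ ≤ 1) : ‖A l f‖ = 1 ↔ ‖A l g‖ = 1 := by
  have e : A l f = A l g + 2 * A l (fun j => (f j - g j) / 2) := by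
    rw [← A_lin]
    congr 1
    funext j
    ring
  have h1 : ‖2 * A l (fun j => (f j - g j) / 2)‖ < 1 := by
    rw [norm_mul]
    exact mul_lt_one_of_nonneg_of_lt_one_left (norm_nonneg _) norm_two_lt (A_mem l _ h)
  rw [e]
  constructor
  · intro h2
    by_contra h3
    have h4 := lt_of_le_of_ne hg h3
    have := (Padic.nonarchimedean (A l g) (2 * A l (fun j => (f j - g j) / 2))).trans_lt
      (max_lt h4 h1)
    linarith
  · intro h2
    rw [Padic.add_eq_max_of_ne (by rw [h2]; exact h1.ne'), h2]
    exact max_eq_left h1.le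

lemma A_even (l : List Bool) (f g : ℕ → K) (hg : R l g) (h : ∀ j, f j = 2 * g j) :
    ‖A l f‖ ≠ 1 := by
  have e : A l f = A l (fun _ => 0) + 2 * A l g := by
    rw [← A_lin]
    congr 1
    funext j
    rw [h]; ring
  have z : A l (fun _ => 0) = 0 := by
    have := A_lin l (fun _ => 0) (fun _ => 0) 1
    simp only [mul_zero, add_zero, one_mul] at this
    simpa using this
  rw [e, z, zero_add, norm_mul]
  exact (mul_lt_one_of_nonneg_of_lt_one_left (norm_nonneg _) norm_two_lt (A_mem l _ hg)).ne

open Polynomial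

lemma R_poly (l : List Bool) (q : ℤ[X]) : R l (fun j => ((q.eval (2 * (j : ℤ)) : ℤ) : K)) := by
  induction q using Polynomial.induction_on' with
  | add p q hp hq =>
    convert R_add l _ _ hp hq using 2
    simp
  | monomial n a =>
    induction n with
    | zero => simpa using R_int l a
    | succ n ih =>
      convert R_mul l _ _ ih (R_two l) using 2
      simp [pow_succ]
      ring

noncomputable def P (q : ℤ[X]) (j : ℕ) : ℤ := ∏ t ∈ Finset.range j, (1 + 2 * q.eval (t : ℤ))

noncomputable def D (q : ℤ[X]) : ℤ[X] :=
  q.comp (2 * X) + q.comp (2 * X + 1) + 2 * q.comp (2 * X) * q.comp (2 * X + 1)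

lemma P_succ (q : ℤ[X]) (j : ℕ) : P q (j + 1) = P q j * (1 + 2 * q.eval (j : ℤ)) :=
  Finset.prod_range_succ _ _

lemma P_two (q : ℤ[X]) (j : ℕ) : P q (2 * j) = P (D q) j := by
  induction j with
  | zero => simp [P]
  | succ j ih =>
    rw [show 2 * (j + 1) = 2 * j + 1 + 1 by ring, P_succ, P_succ, P_succ, ih]
    simp [D]
    ring

lemma norm_odd (z : ℤ) : ‖((1 + 2 * z : ℤ) : K)‖ = 1 := by
  refine le_antisymm (Padic.norm_int_le_one _) (not_lt.1 fun h => ?_)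
  have := (Padic.norm_intCast_lt_one_iff (p := 2)).1 h
  push_cast at this
  omega

lemma P_norm (q : ℤ[X]) (j : ℕ) : ‖(P q j : K)‖ = 1 := by
  induction j with
  | zero => simp [P]
  | succ j ih =>
    rw [P_succ, Int.cast_mul, norm_mul, ih, norm_odd, one_mul]

lemma P_R : ∀ (l : List Bool) (q : ℤ[X]), R l (fun j => (P q j : K))
  | [], q => by simp [R, P]
  | false :: l, q => by
      simp only [R, P_two]
      exact P_R l _
  | true :: l, q => by
      simp only [R, P_two, P_succ]
      refine ⟨P_R l _, ?_⟩
      convert R_mul l _ _ (P_R l (D q)) (R_poly l q) using 2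
      push_cast
      ring

lemma P_congr : ∀ (l : List Bool) (q q' r : ℤ[X]) (_ : q' = q + 2 * r),
    R l (fun j => ((P q' j : K) - P q j) / 2)
  | [], q, q', r, h => by simp [R, P]
  | false :: l, q, q', r, h => by
      simp only [R, P_two]
      refine P_congr l _ _ (r.comp (2 * X) + r.comp (2 * X + 1) +
        2 * (q.comp (2 * X) * r.comp (2 * X + 1) + r.comp (2 * X) * q.comp (2 * X + 1)
          + 2 * r.comp (2 * X) * r.comp (2 * X + 1))) ?_
      simp [D, h]
      ring
  | true :: l, q, q', r, h => by
      have h0 : R l (fun j => ((P (D q') j : K) - P (D q) j) / 2) := by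
        refine P_congr l _ _ (r.comp (2 * X) + r.comp (2 * X + 1) +
          2 * (q.comp (2 * X) * r.comp (2 * X + 1) + r.comp (2 * X) * q.comp (2 * X + 1)
            + 2 * r.comp (2 * X) * r.comp (2 * X + 1))) ?_
        simp [D, h]
        ring
      simp only [R, P_two, P_succ]
      refine ⟨h0, ?_⟩
      convert R_add l _ _ (R_mul l _ _ h0 (R_poly l q'))
        (R_mul l _ _ (P_R l (D q)) (R_poly l r)) using 2
      simp [h]
      ring

/-- numerator polynomial -/
noncomputable def N (m : ℕ) : ℤ[X] := C ((m : ℤ) - 1) - X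

lemma choose_step (n k : ℕ) : (n.choose (k + 1) : K) * (k + 1) = n.choose k * (n - k) := by
  rcases le_or_gt k n with h | h
  · have := Nat.choose_succ_right_eq n k
    rw [← Nat.cast_sub h]
    exact_mod_cast this
  · rw [Nat.choose_eq_zero_of_lt h, Nat.choose_eq_zero_of_lt (by omega)]
    simp

lemma choose_P (m j : ℕ) :
    ((2 * m).choose (2 * j) : K) * (P X j : K) = m.choose j * (P (N m) j : K) := by
  induction j with
  | zero => simp [P]
  | succ j ih =>
    have h1 := choose_step (2 * m) (2 * j)
    have h2 := choose_step (2 * m) (2 * j + 1)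
    have h3 := choose_step m j
    have hj : (j : K) + 1 ≠ 0 := by exact_mod_cast Nat.succ_ne_zero j
    rw [show 2 * (j + 1) = 2 * j + 1 + 1 by ring, P_succ, P_succ]
    simp only [N, eval_sub, eval_C, eval_X] at *
    push_cast at *
    apply mul_right_cancel₀ hj
    apply mul_right_cancel₀ (two_ne_zero (α := K))
    generalize ((2 * m).choose (2 * j + 1 + 1) : K) = c2 at *
    generalize ((2 * m).choose (2 * j + 1) : K) = c1 at *
    generalize ((2 * m).choose (2 * j) : K) = c0 at *
    generalize (m.choose (j + 1) : K) = d1 at *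
    generalize (m.choose j : K) = d0 at *
    linear_combination (P X j : K) * (1 + 2 * (j : K)) * h2 + (P X j : K) * (2 * m - (2 * j + 1)) * h1
      + (2 * (m : K) - 2 * j) * (2 * m - (2 * j + 1)) * ih
      - 2 * (1 + 2 * ((m : K) - 1 - j)) * (P (C ((m : ℤ) - 1) - X) j : K) * h3

lemma N_congr (l : List Bool) : R l (fun j => ((P (N (V l)) j : K) - P X j) / 2) := by
  match l with
  | [] => simp [R, P]
  | true :: l =>
    refine P_congr _ _ _ (C (V l : ℤ) - X) ?_
    simp [N, V]
    ring
  | false :: l =>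
    simp only [R, P_two]
    refine P_congr _ _ _ (2 * C (V l : ℤ) - 2 - 4 * X +
      (2 * C (V l : ℤ) - 1 - 2 * X) * (2 * C (V l : ℤ) - 2 - 2 * X) - 2 * X * (2 * X + 1)) ?_
    simp [N, V, D]
    ring


lemma R_choose_even (l : List Bool) (h : R l (fun j => ((V l).choose j : K))) :
    R l (fun j => ((2 * V l).choose (2 * j) : K)) := by
  have h1 := R_inv l _ (P_R l X) (P_norm X)
  convert R_mul l _ _ (R_mul l _ _ h (P_R l (N (V l)))) h1 using 2 with j
  have hP : (P X j : K) ≠ 0 := by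
    intro h'; have := P_norm X j; simp [h'] at this
  rw [← choose_P]
  field_simp

lemma R_choose_congr (l : List Bool) (h : R l (fun j => ((V l).choose j : K))) :
    R l (fun j => (((2 * V l).choose (2 * j) : K) - (V l).choose j) / 2) := by
  have h1 := R_inv l _ (P_R l X) (P_norm X)
  convert R_mul l _ _ (R_mul l _ _ h (N_congr l)) h1 using 2 with j
  have hP : (P X j : K) ≠ 0 := by
    intro h'; have := P_norm X j; simp [h'] at this
  have := choose_P (V l) j
  field_simp
  linear_combination this

/-- the two odd denominators -/
noncomputable def a (j : ℕ) : K := ((1 + 2 * (j : ℤ) : ℤ) : K)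
noncomputable def b (m j : ℕ) : K := ((1 + 2 * ((m : ℤ) - j) : ℤ) : K)

lemma a_norm (j : ℕ) : ‖a j‖ = 1 := norm_odd _
lemma b_norm (m j : ℕ) : ‖b m j‖ = 1 := norm_odd _
lemma a_ne (j : ℕ) : a j ≠ 0 := by
  intro h'; have := a_norm j; simp [h'] at this
lemma b_ne (m j : ℕ) : b m j ≠ 0 := by
  intro h'; have := b_norm m j; simp [h'] at this

lemma a_R (l : List Bool) : R l a := by
  convert R_add l _ _ (R_int l 1) (R_two l) using 2 with j
  simp [a]
lemma b_R (m : ℕ) (l : List Bool) : R l (b m) := by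
  convert R_sub l _ _ (R_int l (1 + 2 * m)) (R_two l) using 2 with j
  simp [b]
  ring

lemma choose_b (m j : ℕ) :
    ((2 * m + 1).choose (2 * j) : K) = (2 * m).choose (2 * j) * (2 * m + 1) / b m j := by
  rw [eq_div_iff (b_ne m j)]
  rcases le_or_gt j m with h | h
  · have h1 := Nat.choose_mul_succ_eq (2 * m) (2 * j)
    have h2 : ((2 * m + 1 - 2 * j : ℕ) : K) = b m j := by
      rw [Nat.cast_sub (by omega)]
      simp [b]
      ring
    rw [← h2]
    exact_mod_cast h1.symm
  · rw [Nat.choose_eq_zero_of_lt (by omega), Nat.choose_eq_zero_of_lt (by omega)]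
    simp

lemma choose_a (m j : ℕ) :
    ((2 * m + 1).choose (2 * j + 1) : K) = (2 * m).choose (2 * j) * (2 * m + 1) / a j := by
  rw [eq_div_iff (a_ne j)]
  have h1 := Nat.add_one_mul_choose_eq (2 * m) (2 * j)
  have h2 : ((2 * j + 1 : ℕ) : K) = a j := by
    simp [a]
    ring
  rw [← h2, mul_comm ((2 * m).choose (2 * j) : K)]
  exact_mod_cast h1.symm

lemma R_choose : ∀ l : List Bool, R l (fun j => ((V l).choose j : K))
  | [] => by simp [R, V]
  | false :: l => by
      simpa [R, V] using R_choose_even l (R_choose l)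
  | true :: l => by
      have h := R_choose_even l (R_choose l)
      have ha := R_inv l _ (a_R l) a_norm
      have hb := R_inv l _ (b_R (V l) l) (b_norm (V l))
      have hc := R_mul l _ _ h (R_int l (2 * V l + 1))
      simp only [R, V, Bool.toNat_true]
      refine ⟨?_, ?_⟩
      · convert R_mul l _ _ hc hb using 2 with j
        rw [choose_b]
        push_cast
        ring
      · convert R_mul l _ _ (R_mul l _ _ hc (R_mul l _ _ ha hb))
          (R_sub l _ _ (R_int l (V l)) (R_two l)) using 2 with j
        rw [choose_b, choose_a]
        have h1 := a_ne j
        have h2 := b_ne (V l) j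
        field_simp
        simp only [a, b]
        push_cast
        ring

lemma avg_eq (m j : ℕ) :
    (((2 * m + 1).choose (2 * j) : K) + (2 * m + 1).choose (2 * j + 1)) / 2 =
      (2 * m).choose (2 * j) * (2 * m + 1) * (m + 1) * ((a j)⁻¹ * (b m j)⁻¹) := by
  rw [choose_b, choose_a]
  have h1 := a_ne j
  have h2 := b_ne m j
  field_simp
  simp only [a, b]
  push_cast
  ring

lemma R_id (l : List Bool) (h : Even (V l)) : R l (fun j => (j : K)) := by
  match l with
  | [] => simp [R]
  | false :: l => simpa [R] using R_two l
  | true :: l => simp [V] at h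

/-- no adjacent ones -/
def NA : List Bool → Prop
  | [] => True
  | b :: l => NA l ∧ ¬ (b = true ∧ Odd (V l))

lemma main : ∀ l : List Bool, ‖A l (fun j => ((V l).choose j : K))‖ = 1 ↔ NA l
  | [] => by simp [A, NA]
  | false :: l => by
      simp only [A, NA, V, Bool.toNat_false, add_zero]
      rw [A_congr l _ _ (R_choose_congr l (R_choose l)) (A_mem l _ (R_choose l)), main l]
      simp
  | true :: l => by
      have h := R_choose_even l (R_choose l)
      have ha := R_inv l _ (a_R l) a_norm
      have hb := R_inv l _ (b_R (V l) l) (b_norm (V l))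
      have hc := R_mul l _ _ h (R_mul l _ _ ha hb)
      simp only [A, NA, V, Bool.toNat_true, true_and]
      rcases Nat.even_or_odd (V l) with he | ho
      · have hid := R_id l he
        obtain ⟨c, hcc⟩ := he
        have key : R l (fun j => ((((2 * V l + 1).choose (2 * j) : K) +
            (2 * V l + 1).choose (2 * j + 1)) / 2 - (2 * V l).choose (2 * j)) / 2) := by
          have e := R_mul l _ _ (R_sub l _ _ hid (R_int l (V l))) (R_two l)
          convert R_mul l _ _ hc (R_add l _ _ (R_int l ((V l : ℤ) ^ 2 + c)) e) using 2 with j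
          rw [avg_eq]
          have h1 := a_ne j
          have h2 := b_ne (V l) j
          have h3 : (V l : K) = c + c := by exact_mod_cast hcc
          field_simp
          simp only [a, b]
          push_cast
          rw [h3]
          ring
        rw [A_congr l _ _ key (A_mem l _ h),
          A_congr l _ _ (R_choose_congr l (R_choose l)) (A_mem l _ (R_choose l)), main l]
        have : ¬ Odd (V l) := by rw [Nat.not_odd_iff_even]; exact ⟨c, hcc⟩
        simp [this]
      · simp only [ho, not_true, and_false, iff_false]
        obtain ⟨c, hcc⟩ := ho
        refine A_even l _ _ (R_mul l _ _ hc (R_int l ((2 * V l + 1) * (c + 1)))) ?_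
        intro j
        rw [avg_eq]
        have h3 : (V l : K) = 2 * c + 1 := by exact_mod_cast hcc
        push_cast
        rw [h3]
        ring

/-- sum over submasks -/
noncomputable def T (n : ℕ) (f : ℕ → K) : K :=
  ∑ k ∈ (Finset.range (n + 1)).filter (fun k => Odd (n.choose k)), f k

lemma par (m x j y : ℕ) (hx : x < 2) (hy : y < 2) :
    Odd ((2 * m + x).choose (2 * j + y)) ↔ (Odd (x.choose y) ∧ Odd (m.choose j)) := by
  have := Choose.choose_modEq_choose_mod_mul_choose_div_nat (p := 2)
    (n := 2 * m + x) (k := 2 * j + y)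
  rw [show (2 * m + x) % 2 = x by omega, show (2 * j + y) % 2 = y by omega,
    show (2 * m + x) / 2 = m by omega, show (2 * j + y) / 2 = j by omega] at this
  rw [← Nat.odd_mul, Nat.odd_iff, Nat.odd_iff, this]

lemma T_eq (n M : ℕ) (h : n < M) (f : ℕ → K) :
    T n f = ∑ k ∈ Finset.range M, if Odd (n.choose k) then f k else 0 := by
  rw [T, Finset.sum_filter]
  refine Finset.sum_subset ?_ ?_
  · intro x hx
    simp at *
    omega
  · intro x _ hx
    simp at hx
    rw [Nat.choose_eq_zero_of_lt (by omega)]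
    simp

lemma sum_two (M : ℕ) (g : ℕ → K) :
    ∑ k ∈ Finset.range (2 * M), g k = ∑ j ∈ Finset.range M, (g (2 * j) + g (2 * j + 1)) := by
  induction M with
  | zero => simp
  | succ M ih =>
    rw [show 2 * (M + 1) = 2 * M + 1 + 1 by ring, Finset.sum_range_succ, Finset.sum_range_succ,
      Finset.sum_range_succ, ih]
    ring

lemma T_even (m : ℕ) (f : ℕ → K) : T (2 * m) f = T m (fun j => f (2 * j)) := by
  rw [T_eq (2 * m) (2 * (m + 1)) (by omega), T_eq m (m + 1) (by omega), sum_two]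
  refine Finset.sum_congr rfl fun j _ => ?_
  have h0 := par m 0 j 0 (by omega) (by omega)
  have h1 := par m 0 j 1 (by omega) (by omega)
  simp only [add_zero] at h0 h1
  simp [h0, h1]

lemma T_odd (m : ℕ) (f : ℕ → K) :
    T (2 * m + 1) f = T m (fun j => f (2 * j) + f (2 * j + 1)) := by
  rw [T_eq (2 * m + 1) (2 * (m + 1)) (by omega), T_eq m (m + 1) (by omega), sum_two]
  refine Finset.sum_congr rfl fun j _ => ?_
  have h0 := par m 1 j 0 (by omega) (by omega)
  have h1 := par m 1 j 1 (by omega) (by omega)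
  simp only [add_zero] at h0 h1
  by_cases h : Odd (m.choose j) <;> simp [h0, h1, h]

lemma T_A : ∀ (l : List Bool) (f : ℕ → K), T (V l) f = 2 ^ cnt l * A l f
  | [], f => by simp [T, V, A, cnt, Finset.sum_filter]
  | false :: l, f => by
      simp [V, A, cnt, T_even, T_A l]
  | true :: l, f => by
      simp only [V, A, cnt, Bool.toNat_true, T_odd, T_A l]
      have := A_lin l (fun _ => 0) (fun j => (f (2 * j) + f (2 * j + 1)) / 2) 2
      have z := A_lin l (fun _ => 0) (fun _ => 0) 1
      simp only [mul_zero, add_zero, one_mul] at z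
      have z' : A l (fun _ => 0) = 0 := by simpa using z
      rw [z', zero_add] at this
      rw [pow_succ, mul_assoc, ← this]
      congr 2
      funext j
      ring

lemma exists_V (n : ℕ) : ∃ l, V l = n := by
  induction n using Nat.strong_induction_on with
  | _ n ih =>
    rcases Nat.eq_zero_or_pos n with h | h
    · exact ⟨[], h.symm⟩
    · obtain ⟨l, hl⟩ := ih (n / 2) (by omega)
      rcases Nat.mod_two_eq_zero_or_one n with h' | h'
      · exact ⟨false :: l, by simp [V, hl]; omega⟩
      · exact ⟨true :: l, by simp [V, hl]; omega⟩

lemma s2_V : ∀ l : List Bool, s2 (V l) = cnt l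
  | [] => by simp [s2, V, cnt]
  | b :: l => by
      rw [cnt, ← s2_V l, V]
      rcases Nat.eq_zero_or_pos (2 * V l + b.toNat) with h | h
      · have h1 : V l = 0 := by omega
        have h2 : b.toNat = 0 := by omega
        simp [h1, h2, s2]
      · have hb : b.toNat < 2 := Bool.toNat_lt b
        rw [s2, Nat.digits_def' (by norm_num) h, List.sum_cons,
          show (2 * V l + b.toNat) % 2 = b.toNat by omega,
          show (2 * V l + b.toNat) / 2 = V l by omega, s2, add_comm]

lemma NA_iff : ∀ l : List Bool,
    NA l ↔ ∀ i : ℕ, ¬((V l).testBit i = true ∧ (V l).testBit (i + 1) = true)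
  | [] => by simp [NA, V]
  | b :: l => by
      have hb : b.toNat < 2 := Bool.toNat_lt b
      have hs : ∀ i, (V (b :: l)).testBit (i + 1) = (V l).testBit i := by
        intro i
        rw [V, Nat.testBit_add_one, show (2 * V l + b.toNat) / 2 = V l by omega]
      have h0 : (V (b :: l)).testBit 0 = b := by
        cases b <;> simp [V, Nat.testBit_zero]
      have h1 : (V l).testBit 0 = true ↔ Odd (V l) := by
        simp [Nat.testBit_zero, Nat.odd_iff]
      rw [NA, NA_iff l, ← h1]
      constructor
      · rintro ⟨h, h'⟩ i
        cases i with
        | zero => rw [hs, h0]; exact h'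
        | succ i => rw [hs, hs]; exact h i
      · intro h
        refine ⟨fun i => ?_, ?_⟩
        · have := h (i + 1)
          rwa [hs, hs] at this
        · have := h 0
          rwa [hs, h0] at this

end Stmt8



theorem stmt_8 (n : ℕ) (hn : 0 < n)
    (S : ℕ)
    (hS : S = ∑ k ∈ (Finset.range (n + 1)).filter (fun k => Odd (n.choose k)),
        n.choose k) :
    s2 n ≤ padicValNat 2 S ∧
      (padicValNat 2 S = s2 n ↔
        ∀ i : ℕ, ¬(n.testBit i = true ∧ n.testBit (i + 1) = true)) := by
  obtain ⟨l, rfl⟩ := Stmt8.exists_V n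
  rw [Stmt8.s2_V, ← Stmt8.NA_iff, ← Stmt8.main l]
  have hA := Stmt8.A_mem l _ (Stmt8.R_choose l)
  have hT : (S : ℚ_[2]) = 2 ^ Stmt8.cnt l * Stmt8.A l (fun j => ((Stmt8.V l).choose j : ℚ_[2])) := by
    rw [← Stmt8.T_A, Stmt8.T, hS]
    push_cast
    rfl
  have hpos : S ≠ 0 := by
    rw [hS]
    apply ne_of_gt
    apply Finset.sum_pos
    · intro k hk
      simp at hk
      exact Nat.choose_pos (by omega)
    · exact ⟨0, by simp⟩
  have hn2 : ‖(S : ℚ_[2])‖ = (2 : ℝ) ^ (-(padicValNat 2 S : ℤ)) := by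
    have := Padic.norm_eq_zpow_neg_valuation (p := 2) (x := (S : ℚ_[2])) (by exact_mod_cast hpos)
    simpa using this
  set α := Stmt8.A l (fun j => ((Stmt8.V l).choose j : ℚ_[2])) with hα
  have h2 : ‖(2 : ℚ_[2])‖ = 2⁻¹ := by
    have := Padic.norm_p (p := 2)
    simpa using this
  rw [hT, norm_mul, norm_pow, h2] at hn2
  have hα2 : ‖α‖ = (2 : ℝ) ^ ((Stmt8.cnt l : ℤ) - (padicValNat 2 S : ℤ)) := by
    rw [zpow_sub₀ two_ne_zero, zpow_natCast, zpow_natCast]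
    rw [zpow_neg, zpow_natCast, inv_pow] at hn2
    field_simp at hn2 ⊢
    linarith
  constructor
  · rw [hα2] at hA
    have := (zpow_le_one_iff_right₀ (one_lt_two (α := ℝ))).1 hA
    omega
  · rw [hα2, zpow_eq_one_iff_right₀ zero_le_two (by norm_num)]
    omega
end
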